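/- arXiv:1806.01382 — 2 statements merged into one kernel-verified Lean document; each statement's English description precedes it below -/
import Mathlib

section
/- Let d ≥ 3 be a fixed integer. Let A be the adjacency matrix of a random d-regular directed graph on n vertices from the configuration model (i.e., A = A(𝒫) for a uniformly random permutation 𝒫 of {1,…,n}×{1,…,d}). Then P( det A = 0 over the reals ) → 0 as n → ∞; equivalently, #{𝒫 : det A(𝒫) = 0} = o((nd)!). -/
/-!
A first-moment argument over `ZMod p`.  If `det A(P) = 0`, then for each prime `p` the matrix has a
nonzero kernel vector modulo `p`, hence at least `p - 1` of them.  So the singular permutations are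
at most a fraction `1 / (p - 1)` of `∑_{v ≠ 0} kerCount v`, where `kerCount v` counts the
permutations whose matrix annihilates `v` modulo `p`.  For fixed `p > d` this sum is eventually at
most `2 (nd)!` (`first_moment`), and `p` is arbitrary.

Put `v k` on all the points of the fiber `F_k`.  The permutation rearranges this word of length
`nd`, and `A(P) v = 0` says that all `n` rows of the rearranged word have sum zero.  The vectors
`v ≠ 0` are treated according to their letter frequencies.

* A nonzero letter `c` fills more than a proportion `1 - 1 / d`: some row reads `c, …, c`, with sum
  `d c ≠ 0`, so `kerCount v = 0` (`kerCount_eq_zero`).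
* The letter `0` dominates, with `s ≤ ε n` nonzero coordinates: no row meets exactly one nonzero
  letter, so `kerCount v / (nd)!` is at most `(C (s / n) ^ (3 / 2)) ^ s` (`kerCount_sparse`, where
  `d ≥ 3` enters), which beats the number `(O(p n / s)) ^ s` of such vectors (`sparse_sum`).
* No letter dominates: weighting the letter `a` by `q(a) ^ ((d - 1) / d)`, with `q` the frequencies
  of `v`, and comparing with the multinomial coefficient gives
  `kerCount v / (nd)! ≤ poly(n) · wordProb v · G(q) ^ n`, where `wordProb v = ∏_k q(v k)` and `G(q)`
  is the generating function `rowSum` of zero-sum rows (`kerCount_le_rowSum`).  The sum of all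
  `wordProb v` is polynomial in `n`.  The inequality `G(q) ≤ 1` is the arithmetic-geometric mean
  inequality applied to each row, since any `d - 1` letters of a zero-sum row are free; keeping the
  defect in that inequality gives `G(q) ≤ 1 - c χ²(q)`, with `χ²(q)` the distance from the uniform
  distribution (`exists_rowSum_le`).  So vectors with `χ² > K (log n) / n` are negligible
  (`unbalanced_sum`).
* Nearly equidistributed, `χ² ≤ K (log n) / n`: by Fourier inversion `p ^ n · kerCount v` is a sum
  over frequencies `u` of the exponential sums `corr u v = ∑_σ ψ(⟨u, v ∘ σ⟩)` for the lifted words.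
  The `p` constant frequencies contribute `(nd)! p ^ n` in total over all `v` (`sum_main_term`).
  Up to translation by a constant, `0` is a most frequent letter of any other `u`.  If `u` has
  boundedly many nonzero letters, decoupling the sampling without replacement bounds `corr u v`
  (`corr_le_of_small`); otherwise Parseval does (`corr_sq_le`): `corr u v` only depends on the
  letter counts of `u`, so its value is shared by all the rearrangements of `u`.  This is
  `balanced_sum`, with total `1 + o(1)`.
-/

/-- `phi a j` is the number of coordinates of the tuple `a` equal to `j`
(the `j`-th coordinate of the counting vector `Φ(a)`). -/
noncomputable def phi {p k : ℕ} (a : Fin k → ZMod p) (j : ZMod p) : ℕ :=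
  Nat.card {i : Fin k // a i = j}

/-- The adjacency matrix of the `d`-regular directed multigraph on `n` vertices
associated to a permutation `P` of the `n·d` points of the configuration model:
`A(P)_{kℓ} = #{k' ∈ F_k : P(k') ∈ F_ℓ}`. -/
noncomputable def adjMat (n d : ℕ) (P : Equiv.Perm (Fin n × Fin d)) :
    Matrix (Fin n) (Fin n) ℤ :=
  Matrix.of fun k l => (Nat.card {k' : Fin d // (P (k, k')).1 = l} : ℤ)

/-- `T_{d,p}`, the set of `d`-tuples over `F_p` summing to zero. -/
def Tset (d p : ℕ) [NeZero p] : Finset (Fin d → ZMod p) :=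
  Finset.univ.filter (fun a => ∑ i, a i = 0)

namespace SingDigraph

set_option linter.unusedSectionVars false
set_option linter.unusedDecidableInType false
set_option linter.unusedFintypeInType false

open Finset

/-! ### Words and their rearrangements -/

section Words

variable {α β : Type*} [Fintype α] [DecidableEq α] [Fintype β] [DecidableEq β]

/-- The number of positions at which the word `g` takes the value `b`. -/
def cnt (g : α → β) (b : β) : ℕ := #{e | g e = b}

/-- The proportion of positions at which the word `g` takes the value `b`. -/
noncomputable def freq (g : α → β) (b : β) : ℝ := (cnt g b : ℝ) / Fintype.card α

/-- The probability that i.i.d. letters, drawn from the empirical distribution of `g`,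
spell `g`; it equals `exp (-N H)`, with `N` the length of `g` and `H` its empirical entropy. -/
noncomputable def wordProb (g : α → β) : ℝ := ∏ e, freq g (g e)

/-- The number of permutations of the positions that fix the word `g`. -/
def stab (g : α → β) : ℕ := #{σ : Equiv.Perm α | g ∘ σ = g}

lemma sum_cnt (g : α → β) : ∑ b, cnt g b = Fintype.card α := by
  simp only [cnt]
  rw [Finset.sum_card_fiberwise_eq_card_filter]
  simp

lemma cnt_le (g : α → β) (b : β) : cnt g b ≤ Fintype.card α :=
  card_filter_le _ _

lemma freq_nonneg (g : α → β) (b : β) : 0 ≤ freq g b := by unfold freq; positivity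

lemma freq_le_one (g : α → β) (b : β) : freq g b ≤ 1 := by
  unfold freq
  apply div_le_one_of_le₀ _ (by positivity)
  exact_mod_cast cnt_le g b

lemma sum_freq [Nonempty α] (g : α → β) : ∑ b, freq g b = 1 := by
  unfold freq
  rw [← Finset.sum_div, ← Nat.cast_sum, sum_cnt, div_self]
  exact_mod_cast Fintype.card_ne_zero

lemma freq_pos (g : α → β) (e : α) : 0 < freq g (g e) := by
  have h1 : 0 < cnt g (g e) := card_pos.mpr ⟨e, by simp⟩
  have h2 : 0 < Fintype.card α := Fintype.card_pos_iff.mpr ⟨e⟩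
  unfold freq
  positivity

lemma wordProb_pos (g : α → β) : 0 < wordProb g :=
  prod_pos fun e _ => freq_pos g e

lemma wordProb_le_one (g : α → β) : wordProb g ≤ 1 :=
  prod_le_one (fun _ _ => freq_nonneg _ _) fun _ _ => freq_le_one _ _

lemma stab_pos (g : α → β) : 0 < stab g := card_pos.mpr ⟨1, by simp⟩

lemma cnt_comp_perm (g : α → β) (σ : Equiv.Perm α) (b : β) : cnt (g ∘ σ) b = cnt g b := by
  unfold cnt
  apply Finset.card_bij (fun e _ => σ e)
  · intro a ha; simpa using ha
  · intro a _ b _ h; exact σ.injective h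
  · intro c hc; exact ⟨σ.symm c, by simpa using hc, by simp⟩

/-- The rearrangements spelling a given word form a coset of the stabiliser, or the empty set. -/
lemma card_fiber_le (g w : α → β) : #{σ : Equiv.Perm α | g ∘ σ = w} ≤ stab g := by
  rcases Finset.eq_empty_or_nonempty (univ.filter fun σ : Equiv.Perm α => g ∘ σ = w) with h | ⟨τ, hτ⟩
  · rw [h]; simp
  · have hτ' : g ∘ τ = w := by simpa using hτ
    apply Finset.card_le_card_of_injOn (fun σ => σ * τ⁻¹)
    · intro σ hσ
      have hσ' : g ∘ σ = w := by simpa using hσ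
      simp only [coe_filter, mem_univ, true_and, Set.mem_ofPred_eq]
      funext x
      have := congrFun (hσ'.trans hτ'.symm) (τ⁻¹ x)
      simpa using this
    · intro a _ b _ h
      exact mul_right_cancel h

lemma stab_eq (g : α → β) : stab g = ∏ b, (cnt g b).factorial := by
  have := DomMulAct.stabilizer_card g
  simp only [Fintype.card_subtype] at this
  exact this

lemma prod_comp_eq (g : α → β) (x : β → ℝ) : ∏ e, x (g e) = ∏ b, x b ^ cnt g b := by
  rw [← Finset.prod_fiberwise' univ g x]
  simp [cnt]

lemma factorial_le (m N : ℕ) (h : m ≤ N) :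
    (m.factorial : ℝ) ≤ 3 * (N + 1) * ((m : ℝ) / Real.exp 1) ^ m := by
  rcases Nat.eq_zero_or_pos m with rfl | hm
  · simp; nlinarith [(Nat.cast_nonneg N : (0:ℝ) ≤ N)]
  · obtain ⟨k, rfl⟩ := Nat.exists_eq_succ_of_ne_zero hm.ne'
    have h1 := Stirling.stirlingSeq'_antitone (Nat.zero_le k)
    simp only [Function.comp, Nat.succ_eq_add_one, zero_add, Stirling.stirlingSeq_one] at h1
    unfold Stirling.stirlingSeq at h1
    have hpos : 0 < √(2 * ((k+1 : ℕ):ℝ)) * (((k+1:ℕ):ℝ) / Real.exp 1) ^ (k+1) := by positivity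
    rw [div_le_iff₀ hpos] at h1
    refine h1.trans ?_
    have e1 : Real.exp 1 / √2 * (√(2 * ((k+1 : ℕ):ℝ)) * (((k+1:ℕ):ℝ) / Real.exp 1) ^ (k+1))
      = Real.exp 1 * √((k+1:ℕ):ℝ) * (((k+1:ℕ):ℝ) / Real.exp 1) ^ (k+1) := by
      rw [Real.sqrt_mul (by norm_num)]
      field_simp
    rw [e1]
    have e2 : Real.exp 1 ≤ 3 := by linarith [Real.exp_one_lt_d9]
    have e3 : √((k+1:ℕ):ℝ) ≤ N + 1 := by
      rw [Real.sqrt_le_left (by positivity)]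
      have : ((k+1:ℕ):ℝ) ≤ N := by exact_mod_cast h
      nlinarith [(Nat.cast_nonneg N : (0:ℝ) ≤ N)]
    gcongr

lemma le_factorial (m : ℕ) : ((m : ℝ) / Real.exp 1) ^ m ≤ m.factorial := by
  have := Real.pow_div_factorial_le_exp (m : ℝ) (by positivity) m
  rw [div_le_iff₀ (by positivity)] at this
  rw [div_pow, ← Real.exp_nat_mul, mul_one, div_le_iff₀ (by positivity)]
  linarith

/-- The number of rearrangements of `g` is `exp (N H)`, up to a polynomial factor. -/
lemma stab_le (g : α → β) (hα : 0 < Fintype.card α) :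
    (stab g : ℝ) ≤ (3 * (Fintype.card α + 1)) ^ Fintype.card β * wordProb g
      * (Fintype.card α).factorial := by
  set N := Fintype.card α with hN
  have hN0 : (0:ℝ) < N := by exact_mod_cast hα
  rw [stab_eq, Nat.cast_prod]
  calc ∏ b, ((cnt g b).factorial : ℝ)
      ≤ ∏ b, (3 * (N + 1) * ((cnt g b : ℝ) / Real.exp 1) ^ cnt g b) := by
        apply prod_le_prod
        · intros; positivity
        · intro b _; exact factorial_le _ _ (cnt_le g b)
    _ = (3 * (N + 1)) ^ Fintype.card β * ∏ b, ((freq g b) ^ cnt g b * (N / Real.exp 1) ^ cnt g b) := by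
        rw [prod_mul_distrib, prod_const, card_univ]
        congr 1
        apply prod_congr rfl
        intro b _
        rw [← mul_pow]
        congr 1
        unfold freq
        rw [← hN]
        field_simp
    _ = (3 * (N + 1)) ^ Fintype.card β * wordProb g * ((N : ℝ) / Real.exp 1) ^ N := by
        rw [prod_mul_distrib, wordProb, prod_comp_eq g (freq g), prod_pow_eq_pow_sum, sum_cnt, mul_assoc]
    _ ≤ _ := by
        have := le_factorial N
        have := (wordProb_pos g).le
        gcongr

/-- Restricting a word to a class `B` of words is at most as likely under rearrangement as an
arbitrary positive weighting of the letters allows. -/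
lemma weight_bound (g : α → β) (x : β → ℝ) (hx : ∀ b, 0 ≤ x b) (B : (α → β) → Prop)
    [DecidablePred B] :
    (∏ e, x (g e)) * #{σ : Equiv.Perm α | B (g ∘ σ)} ≤ stab g * ∑ w with B w, ∏ e, x (w e) := by
  set S : Finset (Equiv.Perm α) := {σ | B (g ∘ σ)} with hS
  have h1 : #S = ∑ w with B w, #(S.filter fun σ : Equiv.Perm α => g ∘ σ = w) := by
    apply Finset.card_eq_sum_card_fiberwise
    intro σ hσ
    simpa [hS] using hσ
  rw [h1, Nat.cast_sum, mul_sum, mul_sum]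
  apply sum_le_sum
  intro w _
  rcases Finset.eq_empty_or_nonempty (S.filter fun σ : Equiv.Perm α => g ∘ σ = w) with h | ⟨τ, hτ⟩
  · rw [h]
    simp only [card_empty, Nat.cast_zero, mul_zero]
    exact mul_nonneg (by positivity) (prod_nonneg fun _ _ => hx _)
  · have hτ' : g ∘ ⇑τ = w := (mem_filter.mp hτ).2
    have h2 : ∏ e, x (w e) = ∏ e, x (g e) := by
      rw [← hτ']
      exact Equiv.prod_comp τ (fun e => x (g e))
    rw [h2, mul_comm]
    apply mul_le_mul_of_nonneg_right _ (prod_nonneg fun _ _ => hx _)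
    have h3 : (S.filter fun σ : Equiv.Perm α => g ∘ σ = w) ⊆ univ.filter fun σ : Equiv.Perm α => g ∘ σ = w := by
      intro σ hσ
      simpa using (mem_filter.mp hσ).2
    exact_mod_cast (card_le_card h3).trans (card_fiber_le g w)

end Words

/-- The generating function of words whose rows are all constrained to `R` factors over rows. -/
lemma sum_rows {β : Type*} [Fintype β] [DecidableEq β] (n d : ℕ) (x : β → ℝ)
    (R : (Fin d → β) → Prop) [DecidablePred R] :
    ∑ w : Fin n × Fin d → β with (∀ k, R fun i => w (k, i)), ∏ e, x (w e)
      = (∑ r with R r, ∏ i, x (r i)) ^ n := by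
  have h1 : (∑ r with R r, ∏ i, x (r i)) ^ n
      = ∏ _k : Fin n, ∑ r ∈ univ.filter R, ∏ i, x (r i) := by simp
  rw [h1, Finset.prod_univ_sum]
  apply Finset.sum_bij (fun w _ => fun k i => w (k, i))
  · intro w hw
    simpa [Fintype.mem_piFinset] using hw
  · intro a _ b _ h
    funext ⟨k, i⟩
    exact congrFun (congrFun h k) i
  · intro f hf
    refine ⟨fun e => f e.1 e.2, ?_, rfl⟩
    simpa [Fintype.mem_piFinset] using hf
  · intro w _
    exact Fintype.prod_prod_type _

/-! ### Exponential sums over rearrangements -/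

section Fourier

variable {α : Type*} [Fintype α] [DecidableEq α] {p : ℕ} [Fact p.Prime]

/-- The exponential sum `∑_σ ψ(⟨h, g ∘ σ⟩)` over all rearrangements of `g`, with `ψ` the standard
additive character of `ZMod p`. -/
noncomputable def corr (h g : α → ZMod p) : ℂ :=
  ∑ σ : Equiv.Perm α, (ZMod.stdAddChar (∑ e, h e * g (σ e)) : ℂ)

lemma psi_sum {ι : Type*} (s : Finset ι) (f : ι → ZMod p) :
    (ZMod.stdAddChar (∑ i ∈ s, f i) : ℂ) = ∏ i ∈ s, ZMod.stdAddChar (f i) := by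
  classical
  induction s using Finset.induction_on with
  | empty => simp
  | insert a s ha ih => rw [sum_insert ha, prod_insert ha, AddChar.map_add_eq_mul, ih]

lemma orth (w : α → ZMod p) :
    ∑ u : α → ZMod p, (ZMod.stdAddChar (∑ e, u e * w e) : ℂ)
      = if w = 0 then (p : ℂ) ^ Fintype.card α else 0 := by
  have h1 : ∑ u : α → ZMod p, (ZMod.stdAddChar (∑ e, u e * w e) : ℂ)
      = ∏ e, ∑ c : ZMod p, (ZMod.stdAddChar (c * w e) : ℂ) := by
    rw [Finset.prod_univ_sum]
    simp only [Fintype.piFinset_univ, psi_sum]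
  rw [h1]
  have h2 : ∀ e, ∑ c : ZMod p, (ZMod.stdAddChar (c * w e) : ℂ) = if w e = 0 then (p:ℂ) else 0 := by
    intro e
    rw [AddChar.sum_mulShift _ (ZMod.isPrimitive_stdAddChar p)]
    simp
  simp only [h2]
  split_ifs with h
  · subst h; simp
  · obtain ⟨e, he⟩ := Function.ne_iff.mp h
    exact prod_eq_zero (mem_univ e) (if_neg he)

lemma corr_comp (h g : α → ZMod p) (τ : Equiv.Perm α) : corr (h ∘ τ) g = corr h g := by
  unfold corr
  apply Fintype.sum_equiv (Equiv.mulRight τ⁻¹)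
  intro σ
  congr 1
  apply Fintype.sum_equiv τ
  intro e
  simp

/-- Parseval for the function `u ↦ corr u g`. -/
lemma sum_corr_sq (g : α → ZMod p) :
    ∑ u : α → ZMod p, ‖corr u g‖ ^ 2
      ≤ (p : ℝ) ^ Fintype.card α * ((Fintype.card α).factorial * stab g) := by
  have h1 : ((∑ u : α → ZMod p, ‖corr u g‖ ^ 2 : ℝ) : ℂ)
      = ∑ σ : Equiv.Perm α, ∑ τ : Equiv.Perm α,
        if g ∘ σ = g ∘ τ then (p : ℂ) ^ Fintype.card α else 0 := by
    push_cast
    have : ∀ u : α → ZMod p, ((‖corr u g‖ : ℂ)) ^ 2 = ∑ σ : Equiv.Perm α, ∑ τ : Equiv.Perm α,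
        (ZMod.stdAddChar (∑ e, u e * (g (σ e) - g (τ e))) : ℂ) := by
      intro u
      rw [← Complex.mul_conj', corr, map_sum, Finset.sum_mul_sum]
      refine sum_congr rfl fun σ _ => sum_congr rfl fun τ _ => ?_
      rw [← AddChar.map_neg_eq_conj, ← AddChar.map_add_eq_mul, ← sub_eq_add_neg,
        ← sum_sub_distrib]
      simp only [mul_sub]
    simp only [this]
    rw [sum_comm]
    refine sum_congr rfl fun σ _ => ?_
    rw [sum_comm]
    refine sum_congr rfl fun τ _ => ?_
    rw [orth (fun e => g (σ e) - g (τ e))]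
    congr 1
    rw [eq_iff_iff]
    constructor
    · intro h; funext e; exact sub_eq_zero.mp (congrFun h e)
    · intro h; funext e; exact sub_eq_zero.mpr (congrFun h e)
  have h2 : (∑ u : α → ZMod p, ‖corr u g‖ ^ 2 : ℝ) = ∑ σ : Equiv.Perm α, ∑ τ : Equiv.Perm α,
        if g ∘ σ = g ∘ τ then (p : ℝ) ^ Fintype.card α else 0 := by
    have := congrArg Complex.re h1
    rw [Complex.ofReal_re] at this
    rw [this, Complex.re_sum]
    refine sum_congr rfl fun σ _ => ?_
    rw [Complex.re_sum]
    refine sum_congr rfl fun τ _ => ?_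
    split_ifs
    · norm_cast
    · simp
  rw [h2]
  calc ∑ σ : Equiv.Perm α, ∑ τ : Equiv.Perm α,
        (if g ∘ σ = g ∘ τ then (p : ℝ) ^ Fintype.card α else 0)
      ≤ ∑ σ : Equiv.Perm α, (stab g : ℝ) * (p : ℝ) ^ Fintype.card α := by
        refine sum_le_sum fun σ _ => ?_
        rw [← sum_filter, sum_const, nsmul_eq_mul]
        have := card_fiber_le g (g ∘ σ)
        gcongr
        simpa only [eq_comm] using this
    _ = _ := by
        rw [sum_const, card_univ, Fintype.card_perm, nsmul_eq_mul]; ring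

/-- Since `corr u g` only depends on the letter counts of `u`, Parseval bounds each value of it. -/
lemma corr_sq_le (h g : α → ZMod p) :
    ‖corr h g‖ ^ 2 ≤ (p : ℝ) ^ Fintype.card α * stab h * stab g := by
  have h1 : ((Fintype.card α).factorial : ℝ) * ‖corr h g‖ ^ 2
      = ∑ τ : Equiv.Perm α, ‖corr (h ∘ τ) g‖ ^ 2 := by
    simp only [corr_comp]
    rw [sum_const, card_univ, Fintype.card_perm, nsmul_eq_mul]
  have h2 : ∑ τ : Equiv.Perm α, ‖corr (h ∘ τ) g‖ ^ 2 ≤ stab h * ∑ u, ‖corr u g‖ ^ 2 := by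
    rw [← Finset.sum_fiberwise' univ (fun τ : Equiv.Perm α => h ∘ τ) (fun u => ‖corr u g‖ ^ 2),
      mul_sum]
    refine sum_le_sum fun u _ => ?_
    rw [sum_const, nsmul_eq_mul]
    have := card_fiber_le h u
    gcongr
  have h3 := sum_corr_sq g
  have h4 : (0 : ℝ) < (Fintype.card α).factorial := by positivity
  have h5 : ((Fintype.card α).factorial : ℝ) * ‖corr h g‖ ^ 2 ≤ (Fintype.card α).factorial *
      ((p : ℝ) ^ Fintype.card α * stab h * stab g) := by
    rw [h1]
    refine h2.trans ((mul_le_mul_of_nonneg_left h3 (by positivity)).trans (le_of_eq ?_))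
    ring
  exact le_of_mul_le_mul_left h5 h4

/-- The exponential sum `∑_σ ∏_{e ∈ s} ψ(c_e g(σ e))` involving only the positions in `s`. -/
noncomputable def pcorr (g : α → ZMod p) (s : Finset α) (c : α → ZMod p) : ℂ :=
  ∑ σ : Equiv.Perm α, ∏ e ∈ s, (ZMod.stdAddChar (c e * g (σ e)) : ℂ)

/-- Decoupling sampling without replacement: revealing the value at one more position `e₀` amounts
to a complete character sum minus the terms in which `e₀` collides with an earlier position, and
a collision merges two characters into one. -/
lemma pcorr_insert (g : α → ZMod p) (s : Finset α) (c : α → ZMod p) (e₀ : α) (he : e₀ ∉ s) :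
    ((Fintype.card α : ℂ) - #s) * pcorr g (insert e₀ s) c
      = (∑ e, (ZMod.stdAddChar (c e₀ * g e) : ℂ)) * pcorr g s c
        - ∑ e' ∈ s, pcorr g s (Function.update c e' (c e' + c e₀)) := by
  have h1 : ∀ e' ∈ sᶜ, pcorr g (insert e₀ s) c = ∑ σ : Equiv.Perm α,
      (∏ e ∈ s, (ZMod.stdAddChar (c e * g (σ e)) : ℂ)) * ZMod.stdAddChar (c e₀ * g (σ e')) := by
    intro e' he'
    have he'' : e' ∉ s := by simpa using he'
    unfold pcorr
    apply Fintype.sum_equiv (Equiv.mulRight (Equiv.swap e₀ e'))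
    intro σ
    rw [prod_insert he, mul_comm]
    congr 1
    · refine prod_congr rfl fun e hes => ?_
      have h1 : e ≠ e₀ := fun h => he (h ▸ hes)
      have h2 : e ≠ e' := fun h => he'' (h ▸ hes)
      simp [Equiv.swap_apply_of_ne_of_ne h1 h2]
    · simp
  have h2 : ((Fintype.card α : ℂ) - #s) * pcorr g (insert e₀ s) c
      = ∑ e' ∈ sᶜ, pcorr g (insert e₀ s) c := by
    rw [sum_const, card_compl, nsmul_eq_mul, Nat.cast_sub (card_le_univ s)]
  rw [h2, sum_congr rfl h1, sum_comm, eq_sub_iff_add_eq]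
  have h3 : ∀ e' ∈ s, pcorr g s (Function.update c e' (c e' + c e₀)) = ∑ σ : Equiv.Perm α,
      (∏ e ∈ s, (ZMod.stdAddChar (c e * g (σ e)) : ℂ)) * ZMod.stdAddChar (c e₀ * g (σ e')) := by
    intro e' he'
    unfold pcorr
    refine sum_congr rfl fun σ _ => ?_
    rw [← mul_prod_erase _ _ he', ← mul_prod_erase _ (fun e => (ZMod.stdAddChar (c e * g (σ e)) : ℂ)) he']
    rw [Function.update_self, add_mul, AddChar.map_add_eq_mul]
    have : ∏ x ∈ s.erase e', (ZMod.stdAddChar (Function.update c e' (c e' + c e₀) x * g (σ x)) : ℂ)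
        = ∏ x ∈ s.erase e', ZMod.stdAddChar (c x * g (σ x)) := by
      refine prod_congr rfl fun x hx => ?_
      rw [Function.update_of_ne (ne_of_mem_erase hx)]
    rw [this]
    ring
  rw [sum_congr rfl h3, sum_comm (s := s), ← sum_add_distrib]
  unfold pcorr
  rw [mul_sum]
  refine sum_congr rfl fun σ _ => ?_
  rw [sum_compl_add_sum, ← mul_sum, mul_comm]
  congr 1
  exact Equiv.sum_comp σ (fun e => (ZMod.stdAddChar (c e₀ * g e) : ℂ))

/-- If all nontrivial character sums of `g` are at most `D`, with `D ≥ √N`, then sampling `m`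
nontrivial characters without replacement gives a correlation `O_m((D / N) ^ m)`.  The induction
needs trivial characters as well; they are given weight `D ^ 2`. -/
lemma pcorr_le (g : α → ZMod p) (D : ℝ) (hD1 : 1 ≤ D) (hDN : (Fintype.card α : ℝ) ≤ D ^ 2)
    (hD : ∀ c : ZMod p, c ≠ 0 → ‖∑ e, (ZMod.stdAddChar (c * g e) : ℂ)‖ ≤ D) (s : Finset α) :
    ∀ c : α → ZMod p, 2 * #s ≤ Fintype.card α →
    ‖pcorr g s c‖ ≤ (#s).factorial * (2 / Fintype.card α) ^ (#s) *
      (∏ e ∈ s, if c e = 0 then D ^ 2 else D) * (Fintype.card α).factorial := by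
  set N := Fintype.card α with hN
  induction s using Finset.induction_on with
  | empty =>
    intro c _
    simp [pcorr, Fintype.card_perm, ← hN]
  | insert e₀ s he ih =>
    intro c hs
    rw [card_insert_of_notMem he] at hs
    have hNpos : (0 : ℝ) < N := by
      have : 0 < N := by omega
      exact_mod_cast this
    have hsN : ((#s : ℕ) : ℝ) * 2 + 2 ≤ N := by
      have : #s * 2 + 2 ≤ N := by omega
      exact_mod_cast this
    set W : (α → ZMod p) → ℝ := fun c => ∏ e ∈ s, if c e = 0 then D ^ 2 else D with hW
    have hWpos : ∀ c, 0 ≤ W c := fun c => prod_nonneg fun e _ => by split_ifs <;> positivity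
    set w₀ : ℝ := if c e₀ = 0 then D ^ 2 else D with hw₀
    have hw₀D : D ≤ w₀ := by rw [hw₀]; split_ifs <;> nlinarith
    have hw₀pos : 0 ≤ w₀ := by linarith
    have key := congrArg norm (pcorr_insert g s c e₀ he)
    rw [norm_mul] at key
    have e1 : ‖(Fintype.card α : ℂ) - #s‖ = N - #s := by
      rw [← hN, ← Nat.cast_sub (by omega), Complex.norm_natCast, Nat.cast_sub (by omega)]
    rw [e1] at key
    have hsum : ‖∑ e, (ZMod.stdAddChar (c e₀ * g e) : ℂ)‖ ≤ w₀ := by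
      rw [hw₀]
      split_ifs with h0
      · rw [h0]
        simp only [zero_mul, AddChar.map_zero_eq_one, sum_const, card_univ, nsmul_eq_mul, mul_one]
        rw [Complex.norm_natCast]
        exact hDN
      · exact hD _ h0
    set F : ℝ := (#s).factorial * (2 / N) ^ (#s) with hF
    have hFpos : 0 ≤ F := by positivity
    have hupd : ∀ e' ∈ s, ‖pcorr g s (Function.update c e' (c e' + c e₀))‖
        ≤ F * (w₀ * W c) * N.factorial := by
      intro e' he'
      refine (ih _ (by omega)).trans ?_
      have hle : (∏ e ∈ s, if Function.update c e' (c e' + c e₀) e = 0 then D ^ 2 else D)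
          ≤ w₀ * W c := by
        rw [hW]
        simp only
        rw [← mul_prod_erase _ _ he', ← mul_prod_erase _ (fun e => if c e = 0 then D ^ 2 else D) he',
          ← mul_assoc]
        have : ∏ x ∈ s.erase e', (if Function.update c e' (c e' + c e₀) x = 0 then D ^ 2 else D)
            = ∏ x ∈ s.erase e', if c x = 0 then D ^ 2 else D := by
          refine prod_congr rfl fun x hx => ?_
          rw [Function.update_of_ne (ne_of_mem_erase hx)]
        rw [this]
        apply mul_le_mul_of_nonneg_right
        · have a1 : (if Function.update c e' (c e' + c e₀) e' = 0 then D ^ 2 else D) ≤ D ^ 2 := by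
            split_ifs <;> nlinarith
          have a2 : D ≤ if c e' = 0 then D ^ 2 else D := by split_ifs <;> nlinarith
          nlinarith
        · exact prod_nonneg fun e _ => by split_ifs <;> positivity
      gcongr
    have hmain : ((N : ℝ) - #s) * ‖pcorr g (insert e₀ s) c‖
        ≤ (#s + 1) * (F * (w₀ * W c) * N.factorial) := by
      rw [key]
      refine (norm_sub_le _ _).trans ?_
      rw [norm_mul]
      have b1 := ih c (by omega)
      have b2 : ‖∑ e' ∈ s, pcorr g s (Function.update c e' (c e' + c e₀))‖
          ≤ #s * (F * (w₀ * W c) * N.factorial) := by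
        refine (norm_sum_le _ _).trans ((sum_le_sum hupd).trans (le_of_eq ?_))
        rw [sum_const, nsmul_eq_mul]
      have b3 : ‖∑ e, (ZMod.stdAddChar (c e₀ * g e) : ℂ)‖ * ‖pcorr g s c‖
          ≤ w₀ * (F * W c * N.factorial) := by
        apply mul_le_mul hsum b1 (norm_nonneg _) hw₀pos
      nlinarith
    rw [card_insert_of_notMem he, prod_insert he, Nat.factorial_succ]
    have hX : 0 ≤ (#s + 1) * (F * (w₀ * W c) * (N.factorial : ℝ)) := by
      have := hWpos c
      positivity
    have h2 : ‖pcorr g (insert e₀ s) c‖ ≤ (2 / N) * ((#s + 1) * (F * (w₀ * W c) * N.factorial)) := by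
      rw [div_mul_eq_mul_div, le_div_iff₀ hNpos]
      nlinarith [norm_nonneg (pcorr g (insert e₀ s) c)]
    refine h2.trans (le_of_eq ?_)
    rw [hF]
    push_cast
    ring

lemma corr_eq_pcorr (h g : α → ZMod p) : corr h g = pcorr g {e | h e ≠ 0} h := by
  unfold corr pcorr
  refine sum_congr rfl fun σ _ => ?_
  rw [psi_sum]
  symm
  apply prod_subset (subset_univ _)
  intro e _ he
  have : h e = 0 := by simpa using he
  simp [this]

/-- `pcorr_le` applied to the support of `h`. -/
lemma corr_le_of_small (h g : α → ZMod p) (D : ℝ) (hD1 : 1 ≤ D)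
    (hDN : (Fintype.card α : ℝ) ≤ D ^ 2)
    (hD : ∀ c : ZMod p, c ≠ 0 → ‖∑ e, (ZMod.stdAddChar (c * g e) : ℂ)‖ ≤ D)
    (m : ℕ) (hm : #{e | h e ≠ 0} = m) (hmN : 2 * m ≤ Fintype.card α) :
    ‖corr h g‖ ≤ m.factorial * (2 * D / Fintype.card α) ^ m * (Fintype.card α).factorial := by
  rw [corr_eq_pcorr]
  refine (pcorr_le g D hD1 hDN hD _ h (by rw [hm]; exact hmN)).trans (le_of_eq ?_)
  have : (∏ e with h e ≠ 0, if h e = 0 then D ^ 2 else D) = D ^ m := by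
    rw [← hm, ← prod_const]
    refine prod_congr rfl fun e he => ?_
    rw [if_neg (by simpa using he)]
  rw [this, hm]
  rw [mul_div_assoc, mul_comm 2, div_eq_mul_inv, div_eq_mul_inv]
  ring

end Fourier

/-! ### The rate function away from the uniform distribution -/

/-- The arithmetic-geometric mean inequality with an explicit defect coming from two terms. -/
lemma amgm_defect (k : ℕ) (τ : Fin (k + 2) → ℝ) (hτ : ∀ j, 0 ≤ τ j) :
    ((k + 2 : ℕ) : ℝ) * ∏ j, τ j + (√(τ 0 ^ (k + 2)) - √(τ 1 ^ (k + 2))) ^ 2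
      ≤ ∑ j, τ j ^ (k + 2) := by
  set g := √(τ 0 * τ 1) with hg
  have hg0 : 0 ≤ g := Real.sqrt_nonneg _
  have hgg : g * g = τ 0 * τ 1 := Real.mul_self_sqrt (mul_nonneg (hτ 0) (hτ 1))
  -- replacing both `τ 0` and `τ 1` by their geometric mean keeps the product
  set y : Fin (k + 2) → ℝ := Fin.cons g (Fin.cons g fun i => τ i.succ.succ) with hy
  have hy0 : ∀ j, 0 ≤ y j := by
    intro j
    refine Fin.cases ?_ (fun j => Fin.cases ?_ (fun j => ?_) j) j
    · simpa [hy] using hg0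
    · simpa [hy] using hg0
    · simpa [hy] using hτ _
  have hy1 : y 0 = g := rfl
  have hy2 : y 1 = g := rfl
  have hy3 : ∀ i : Fin k, y i.succ.succ = τ i.succ.succ := fun _ => rfl
  have hn : ((k + 2 : ℕ) : ℝ) ≠ 0 := by positivity
  have h := Real.geom_mean_le_arith_mean_weighted univ (fun _ => ((k + 2 : ℕ) : ℝ)⁻¹)
    (fun j => y j ^ (k + 2)) (fun _ _ => by positivity)
    (by simp only [sum_const, card_univ, Fintype.card_fin, nsmul_eq_mul]; field_simp)
    (fun j _ => pow_nonneg (hy0 j) _)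
  have h1 : ∀ j, (y j ^ (k + 2)) ^ (((k + 2 : ℕ) : ℝ)⁻¹) = y j := fun j =>
    Real.pow_rpow_inv_natCast (hy0 j) (by omega)
  simp only [h1] at h
  rw [← mul_sum] at h
  have h2 : ((k + 2 : ℕ) : ℝ) * ∏ j, y j ≤ ∑ j, y j ^ (k + 2) := by
    have := mul_le_mul_of_nonneg_left h (show (0:ℝ) ≤ ((k + 2 : ℕ) : ℝ) by positivity)
    rwa [← mul_assoc, mul_inv_cancel₀ hn, one_mul] at this
  have e1 : ∏ j, y j = ∏ j, τ j := by
    rw [Fin.prod_univ_succ, Fin.prod_univ_succ, Fin.prod_univ_succ (f := τ),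
      Fin.prod_univ_succ (f := fun i => τ (Fin.succ i)), ← mul_assoc, ← mul_assoc]
    simp only [hy3, Fin.succ_zero_eq_one, hy1, hy2]
    rw [hgg]
  have e2 : g ^ (k + 2) = √(τ 0 ^ (k + 2)) * √(τ 1 ^ (k + 2)) := by
    rw [← Real.sqrt_mul (pow_nonneg (hτ 0) _), ← mul_pow]
    rw [hg]
    rw [eq_comm, Real.sqrt_eq_iff_mul_self_eq (by have := mul_nonneg (hτ 0) (hτ 1); positivity) (by positivity)]
    rw [← mul_pow, Real.mul_self_sqrt (mul_nonneg (hτ 0) (hτ 1))]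
  have e3 : ∑ j, y j ^ (k + 2) + (√(τ 0 ^ (k + 2)) - √(τ 1 ^ (k + 2))) ^ 2 = ∑ j, τ j ^ (k + 2) := by
    rw [Fin.sum_univ_succ, Fin.sum_univ_succ, Fin.sum_univ_succ (f := fun j => τ j ^ (k + 2)),
      Fin.sum_univ_succ (f := fun i => τ (Fin.succ i) ^ (k + 2))]
    simp only [hy3, Fin.succ_zero_eq_one, hy1, hy2]
    rw [e2, sub_sq, Real.sq_sqrt (pow_nonneg (hτ 0) _), Real.sq_sqrt (pow_nonneg (hτ 1) _)]
    ring
  rw [e1] at h2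
  linarith

section Rate

variable {p : ℕ} [Fact p.Prime]

/-- With letter weights `ρ ^ (d - 1)`, the generating function of the rows of length `d = k + 3`
that sum to zero. -/
noncomputable def rowSum (k : ℕ) (ρ : ZMod p → ℝ) : ℝ :=
  ∑ r : Fin (k + 3) → ZMod p with ∑ i, r i = 0, ∏ i, ρ (r i) ^ (k + 2)

lemma prod_prod_succAbove {β : Type*} (m : ℕ) (f : β → ℝ) (r : Fin (m + 1) → β) :
    ∏ j, ∏ i, f (r (Fin.succAbove j i)) = ∏ i, f (r i) ^ m := by
  have h1 : ∀ j : Fin (m + 1), ∏ i, f (r (Fin.succAbove j i)) = ∏ i ∈ univ.erase j, f (r i) := by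
    intro j
    have : univ.erase j = univ.image (Fin.succAbove j) := by
      rw [Fin.image_succAbove_univ]
      ext; simp
    rw [this, prod_image (fun a _ b _ h => Fin.succAbove_right_injective h)]
  simp only [h1]
  rw [Finset.prod_comm' (t' := univ) (s' := fun i => univ.erase i)
    (by intro x y; simp [eq_comm])]
  simp

/-- Omitting any one letter, the remaining ones of a zero-sum row are free. -/
lemma sum_zero_rows (m : ℕ) (q : ZMod p → ℝ) (hq : ∑ a, q a = 1) (j : Fin (m + 1)) :
    ∑ r : Fin (m + 1) → ZMod p with ∑ i, r i = 0, ∏ i, q (r (j.succAbove i)) = 1 := by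
  have h1 : ∑ r : Fin m → ZMod p, ∏ i, q (r i) = 1 := by
    rw [← Fintype.sum_pow, hq, one_pow]
  rw [← h1]
  symm
  apply Finset.sum_bij (fun r _ => (j.insertNth (α := fun _ => ZMod p) (-∑ i, r i) r : Fin (m + 1) → ZMod p))
  · intro r _
    simp [Fin.sum_univ_succAbove _ j]
  · intro a _ b _ h
    have := congrArg (fun f : Fin (m+1) → ZMod p => j.removeNth f) h
    simpa using this
  · intro r hr
    refine ⟨j.removeNth r, mem_univ _, ?_⟩
    have hr' : ∑ i, r i = 0 := by simpa using hr
    rw [Fin.sum_univ_succAbove _ j] at hr'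
    have : r j = -∑ i, j.removeNth r i := by
      rw [eq_neg_iff_add_eq_zero]; exact hr'
    rw [← this]
    simp
  · intro r _
    simp

/-- Each single zero-sum row bounds the gap `1 - rowSum` from below. -/
lemma rowSum_gap (k : ℕ) (q ρ : ZMod p → ℝ) (hρ : ∀ a, 0 ≤ ρ a) (hρq : ∀ a, ρ a ^ (k + 3) = q a)
    (hq : ∑ a, q a = 1) (a : ZMod p) (t : Fin (k + 1) → ZMod p) :
    (∏ i, q (t i)) * (√(q (-∑ i, t i - a)) - √(q a)) ^ 2
      ≤ ((k + 3 : ℕ) : ℝ) * (1 - rowSum k ρ) := by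
  set Z : Finset (Fin (k + 3) → ZMod p) := {r | ∑ i, r i = 0} with hZ
  have hq0 : ∀ a, 0 ≤ q a := fun a => hρq a ▸ pow_nonneg (hρ a) _
  set τ : (Fin (k + 3) → ZMod p) → Fin (k + 3) → ℝ :=
    fun r j => ∏ i, ρ (r (j.succAbove i)) with hτ
  have hτ0 : ∀ r j, 0 ≤ τ r j := fun r j => prod_nonneg fun _ _ => hρ _
  have hτp : ∀ r j, τ r j ^ (k + 3) = ∏ i, q (r (j.succAbove i)) := by
    intro r j
    rw [hτ]
    simp only
    rw [← prod_pow]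
    exact prod_congr rfl fun i _ => hρq _
  have hdef := fun r => amgm_defect (k + 1) (τ r) (hτ0 r)
  have hprod : ∀ r, ∏ j, τ r j = ∏ i, ρ (r i) ^ (k + 2) := fun r => prod_prod_succAbove (k + 2) ρ r
  have hS : ∑ r ∈ Z, ∑ j, τ r j ^ (k + 3) = ((k + 3 : ℕ) : ℝ) := by
    rw [sum_comm]
    simp only [hτp]
    have : ∀ j : Fin (k + 3), ∑ r ∈ Z, ∏ i, q (r (j.succAbove i)) = 1 := fun j =>
      sum_zero_rows (k + 2) q hq j
    simp [this]
  -- only the defect of this row is kept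
  set r₀ : Fin (k + 3) → ZMod p := Fin.cons a (Fin.cons (-∑ i, t i - a) t) with hr₀
  have hr₀Z : r₀ ∈ Z := by
    simp [hZ, hr₀, Fin.sum_univ_succ (n := k + 2), Fin.sum_univ_succ (n := k + 1)]
    ring
  set δ : (Fin (k + 3) → ZMod p) → ℝ := fun r => (√(τ r 0 ^ (k + 3)) - √(τ r 1 ^ (k + 3))) ^ 2 with hδ
  have hsingle : δ r₀ ≤ ∑ r ∈ Z, δ r :=
    single_le_sum (f := δ) (fun r _ => sq_nonneg _) hr₀Z
  have hsum : ∑ r ∈ Z, (((k + 3 : ℕ) : ℝ) * ∏ j, τ r j + δ r) ≤ ∑ r ∈ Z, ∑ j, τ r j ^ (k + 3) :=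
    sum_le_sum fun r _ => hdef r
  rw [sum_add_distrib, ← mul_sum, hS] at hsum
  have hrow : ∑ r ∈ Z, ∏ j, τ r j = rowSum k ρ := by
    simp only [hprod]; rfl
  rw [hrow] at hsum
  have hd : δ r₀ = (∏ i, q (t i)) * (√(q (-∑ i, t i - a)) - √(q a)) ^ 2 := by
    have e0 : τ r₀ 0 ^ (k + 3) = q (-∑ i, t i - a) * ∏ i, q (t i) := by
      rw [hτp, Fin.prod_univ_succ]
      simp [hr₀]
    have e1 : τ r₀ 1 ^ (k + 3) = q a * ∏ i, q (t i) := by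
      rw [hτp, Fin.prod_univ_succ, show (1 : Fin (k + 3)) = Fin.succ 0 from rfl]
      simp [hr₀, Fin.succ_succAbove_succ, -Fin.succ_zero_eq_one, -Fin.succ_zero_eq_one']
    have hR : 0 ≤ ∏ i, q (t i) := prod_nonneg fun _ _ => hq0 _
    simp only [hδ]
    rw [e0, e1, Real.sqrt_mul (hq0 _), Real.sqrt_mul (hq0 _), ← sub_mul, mul_pow, Real.sq_sqrt hR,
      mul_comm]
  rw [← hd]
  linarith

/-- The `χ²`-distance of `q` from the uniform distribution. -/
noncomputable def chi (q : ZMod p → ℝ) : ℝ := p * ∑ a, q a ^ 2 - 1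

lemma chi_eq (q : ZMod p → ℝ) (hq : ∑ a, q a = 1) :
    2 * chi q = ∑ a, ∑ b, (q a - q b) ^ 2 := by
  have : ∀ a, ∑ b, (q a - q b) ^ 2 = p * q a ^ 2 - 2 * q a + ∑ b, q b ^ 2 := by
    intro a
    simp only [sub_sq, sum_add_distrib, sum_sub_distrib]
    rw [← mul_sum, hq]
    simp [ZMod.card]
  simp only [this, sum_add_distrib, sum_sub_distrib, ← mul_sum]
  rw [hq]
  simp only [sum_const, card_univ, ZMod.card, nsmul_eq_mul, chi]
  ring

lemma chi_nonneg (q : ZMod p → ℝ) (hq : ∑ a, q a = 1) : 0 ≤ chi q := by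
  have h := chi_eq q hq
  have : 0 ≤ ∑ a, ∑ b, (q a - q b) ^ 2 := sum_nonneg fun _ _ => sum_nonneg fun _ _ => sq_nonneg _
  linarith

/-- A function on `ZMod p` that changes little under one nonzero translation is nearly constant. -/
lemma near_const (s : ZMod p → ℝ) (h : ZMod p) (hh : h ≠ 0) (T : ℝ) (hT : ∀ x, |s (x + h) - s x| ≤ T)
    (x y : ZMod p) : |s y - s x| ≤ p * T := by
  have hT0 : 0 ≤ T := (abs_nonneg _).trans (hT 0)
  have hstep : ∀ j : ℕ, |s (x + j * h) - s x| ≤ j * T := by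
    intro j
    induction j with
    | zero => simp
    | succ j ih =>
      have e : x + ((j + 1 : ℕ) : ZMod p) * h = (x + j * h) + h := by push_cast; ring
      rw [e]
      have := abs_sub_le (s (x + j * h + h)) (s (x + j * h)) (s x)
      have := hT (x + j * h)
      push_cast
      linarith
  have := hstep ((y - x) / h).val
  rw [ZMod.natCast_zmod_val, div_mul_cancel₀ _ hh, add_sub_cancel] at this
  refine this.trans ?_
  have : (((y - x) / h).val : ℝ) ≤ p := by exact_mod_cast (ZMod.val_lt _).le
  gcongr

/-- Unless one letter carries almost all the mass, the gap `1 - rowSum` is at least a multiple of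
the `χ²`-distance from the uniform distribution: two letters of positive mass make `√q` nearly
symmetric about two different centres, hence nearly invariant under a translation. -/
lemma exists_rowSum_le (p : ℕ) [Fact p.Prime] (k : ℕ) (ε : ℝ) (hε : 0 < ε) (hε1 : ε ≤ 1) :
    ∃ c : ℝ, 0 < c ∧ ∀ q ρ : ZMod p → ℝ, (∀ a, 0 ≤ ρ a) → (∀ a, ρ a ^ (k + 3) = q a) →
      ∑ a, q a = 1 → (∀ a, q a ≤ 1 - ε) → rowSum k ρ ≤ 1 - c * chi q := by
  have hp0 : (0 : ℝ) < p := by exact_mod_cast (Fact.out : p.Prime).pos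
  set η : ℝ := ε / p with hη
  have hη0 : 0 < η := by positivity
  refine ⟨η ^ (k + 1) / (8 * p ^ 4 * (k + 3 : ℕ)), by positivity, ?_⟩
  intro q ρ hρ hρq hq hqε
  have hq0 : ∀ a, 0 ≤ q a := fun a => hρq a ▸ pow_nonneg (hρ a) _
  obtain ⟨α, -, hα⟩ : ∃ α ∈ (univ : Finset (ZMod p)), (1 : ℝ) / p ≤ q α := by
    apply exists_le_of_sum_le univ_nonempty
    rw [hq]
    simp only [sum_const, card_univ, ZMod.card, nsmul_eq_mul]
    field_simp
    rfl
  obtain ⟨β, hβα, hβ⟩ : ∃ β ∈ (univ : Finset (ZMod p)).erase α, η ≤ q β := by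
    have hs := add_sum_erase univ q (mem_univ α)
    rw [hq] at hs
    have hne : ((univ : Finset (ZMod p)).erase α).Nonempty := by
      by_contra hcon
      rw [not_nonempty_iff_eq_empty] at hcon
      rw [hcon] at hs
      have := hqε α
      simp at hs
      linarith
    apply exists_le_of_sum_le hne
    have h1 : ((univ : Finset (ZMod p)).erase α).card ≤ p := by
      have := card_le_univ ((univ : Finset (ZMod p)).erase α)
      rwa [ZMod.card] at this
    rw [sum_const, nsmul_eq_mul]
    have h2 : (((univ : Finset (ZMod p)).erase α).card : ℝ) * η ≤ p * η := by
      gcongr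
    have h3 : p * η = ε := by rw [hη]; field_simp
    have := hqε α
    linarith
  have hαη : η ≤ q α := le_trans (by rw [hη]; gcongr) hα
  set G : ℝ := ((k + 3 : ℕ) : ℝ) * (1 - rowSum k ρ) with hG
  set s : ZMod p → ℝ := fun a => √(q a) with hs
  -- `√q` is nearly symmetric about the centre determined by any tail `t` of letters of mass `≥ η`
  have hsym : ∀ t : Fin (k + 1) → ZMod p, (∀ i, η ≤ q (t i)) → ∀ a,
      η ^ (k + 1) * (s (-∑ i, t i - a) - s a) ^ 2 ≤ G := by
    intro t ht a
    refine le_trans ?_ (rowSum_gap k q ρ hρ hρq hq a t)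
    apply mul_le_mul_of_nonneg_right _ (sq_nonneg _)
    calc η ^ (k + 1) = ∏ _i : Fin (k + 1), η := by simp
      _ ≤ _ := prod_le_prod (fun _ _ => hη0.le) fun i _ => ht i
  have hηk : 0 < η ^ (k + 1) := by positivity
  have hG0 : 0 ≤ G := le_trans (by positivity) (hsym (fun _ => α) (fun _ => hαη) 0)
  set τ : ℝ := √(G / η ^ (k + 1)) with hτ
  have hτsq : τ ^ 2 = G / η ^ (k + 1) := Real.sq_sqrt (by positivity)
  have hsym' : ∀ t : Fin (k + 1) → ZMod p, (∀ i, η ≤ q (t i)) → ∀ a,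
      |s (-∑ i, t i - a) - s a| ≤ τ := by
    intro t ht a
    apply abs_le_of_sq_le_sq _ (Real.sqrt_nonneg _)
    rw [hτsq, le_div_iff₀ hηk]
    linarith [hsym t ht a]
  -- these two tails give symmetries that compose to the translation by `β - α`
  set t₁ : Fin (k + 1) → ZMod p := fun _ => α with ht₁
  set t₂ : Fin (k + 1) → ZMod p := Fin.cons β fun _ => α with ht₂
  have h12 : -∑ i, t₁ i = -∑ i, t₂ i + (β - α) := by
    simp [ht₁, ht₂, Fin.sum_univ_succ]
    ring
  have hT : ∀ x, |s (x + (β - α)) - s x| ≤ 2 * τ := by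
    intro x
    have a1 := hsym' t₁ (fun _ => hαη) (-∑ i, t₂ i - x)
    have a2 := hsym' t₂ (fun i => by
      refine Fin.cases ?_ (fun j => ?_) i
      · simpa [ht₂] using hβ
      · simpa [ht₂] using hαη) x
    have e : -∑ i, t₁ i - (-∑ i, t₂ i - x) = x + (β - α) := by rw [h12]; ring
    rw [e] at a1
    have := abs_sub_le (s (x + (β - α))) (s (-∑ i, t₂ i - x)) (s x)
    linarith
  have hne : β - α ≠ 0 := sub_ne_zero.mpr (ne_of_mem_erase hβα)
  have hall := near_const s (β - α) hne (2 * τ) hT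
  have hpair : ∀ a b, (q a - q b) ^ 2 ≤ 16 * p ^ 2 * τ ^ 2 := by
    intro a b
    have h1 : ∀ a, q a = s a * s a := fun a => (Real.mul_self_sqrt (hq0 a)).symm
    have h2 : ∀ a, s a ≤ 1 := fun a => by
      rw [hs]
      exact Real.sqrt_le_one.mpr (by linarith [hqε a])
    have h3 : ∀ a, 0 ≤ s a := fun a => Real.sqrt_nonneg _
    have h4 : (s a - s b) ^ 2 ≤ (p * (2 * τ)) ^ 2 := sq_le_sq' (by linarith [abs_le.mp (hall b a)]) (by linarith [abs_le.mp (hall b a)])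
    rw [h1 a, h1 b]
    have h5 : (s a * s a - s b * s b) ^ 2 = (s a + s b) ^ 2 * (s a - s b) ^ 2 := by ring
    rw [h5]
    have h6 : (s a + s b) ^ 2 ≤ 4 := by nlinarith [h2 a, h2 b, h3 a, h3 b]
    calc (s a + s b) ^ 2 * (s a - s b) ^ 2 ≤ 4 * (p * (2 * τ)) ^ 2 := by gcongr
      _ = _ := by ring
  have hchi : 2 * chi q ≤ 16 * p ^ 4 * τ ^ 2 := by
    rw [chi_eq q hq]
    calc ∑ a, ∑ b, (q a - q b) ^ 2 ≤ ∑ _a : ZMod p, ∑ _b : ZMod p, 16 * (p:ℝ) ^ 2 * τ ^ 2 :=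
          sum_le_sum fun a _ => sum_le_sum fun b _ => hpair a b
      _ = _ := by simp only [sum_const, card_univ, ZMod.card, nsmul_eq_mul]; ring
  rw [hτsq] at hchi
  have hk : (0:ℝ) < ((k + 3 : ℕ) : ℝ) := by positivity
  have h1 : chi q ≤ 8 * p ^ 4 * (G / η ^ (k + 1)) := by linarith
  have h2 : η ^ (k + 1) / (8 * p ^ 4 * ((k + 3 : ℕ) : ℝ)) * chi q ≤ 1 - rowSum k ρ := by
    calc η ^ (k + 1) / (8 * p ^ 4 * ((k + 3 : ℕ) : ℝ)) * chi q
        ≤ η ^ (k + 1) / (8 * p ^ 4 * ((k + 3 : ℕ) : ℝ)) * (8 * p ^ 4 * (G / η ^ (k + 1))) := by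
          gcongr
      _ = 1 - rowSum k ρ := by rw [hG]; field_simp
  linarith

end Rate

/-! ### Kernel vectors and their counts -/

section Kernel

variable {n p : ℕ} [Fact p.Prime]

/-- The word on the points of the configuration model that is constantly `v k` on the `k`-th
fiber. -/
def lift {β : Type*} (d : ℕ) (v : Fin n → β) : Fin n × Fin d → β := fun e => v e.1

/-- The number of permutations whose adjacency matrix annihilates `v` modulo `p`. -/
def kerCount (d : ℕ) (v : Fin n → ZMod p) : ℕ :=
  #{σ : Equiv.Perm (Fin n × Fin d) | ∀ k, ∑ i, v (σ (k, i)).1 = 0}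

lemma cnt_lift {β : Type*} [Fintype β] [DecidableEq β] (d : ℕ) (v : Fin n → β) (b : β) :
    cnt (lift d v) b = cnt v b * d := by
  unfold cnt lift
  have : (univ.filter fun e : Fin n × Fin d => v e.1 = b)
      = (univ.filter fun k => v k = b) ×ˢ (univ : Finset (Fin d)) := by
    ext e; simp
  rw [this, card_product]
  simp

lemma freq_lift {β : Type*} [Fintype β] [DecidableEq β] {d : ℕ} (hd : 0 < d) (v : Fin n → β)
    (b : β) : freq (lift d v) b = freq v b := by
  have : (d : ℝ) ≠ 0 := by positivity
  unfold freq
  rw [cnt_lift, Fintype.card_prod, Fintype.card_fin, Fintype.card_fin]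
  push_cast
  exact mul_div_mul_right _ _ this

lemma prod_lift {β : Type*} (d : ℕ) (v : Fin n → β) (x : β → ℝ) :
    ∏ e, x (lift d v e) = (∏ k, x (v k)) ^ d := by
  unfold lift
  rw [Fintype.prod_prod_type, ← prod_pow]
  simp

lemma wordProb_lift {β : Type*} [Fintype β] [DecidableEq β] {d : ℕ} (hd : 0 < d) (v : Fin n → β) :
    wordProb (lift d v) = wordProb v ^ d := by
  unfold wordProb
  simp only [freq_lift hd]
  exact prod_lift d v (freq v)

/-- The total empirical probability is at most the number of types. -/
lemma sum_wordProb_le (hn : 0 < n) :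
    ∑ v : Fin n → ZMod p, wordProb v ≤ ((n : ℝ) + 1) ^ p := by
  have hn' : (0 : ℝ) < n := by exact_mod_cast hn
  have : Nonempty (Fin n) := ⟨⟨0, hn⟩⟩
  set T : (Fin n → ZMod p) → (ZMod p → Fin (n + 1)) :=
    fun v b => ⟨cnt v b, Nat.lt_succ_of_le ((cnt_le v b).trans (by simp))⟩ with hT
  rw [← sum_fiberwise_of_maps_to (t := univ) (g := T) (fun _ _ => mem_univ _)]
  calc ∑ c : ZMod p → Fin (n + 1), ∑ v with T v = c, wordProb v
      ≤ ∑ _c : ZMod p → Fin (n + 1), (1 : ℝ) := by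
        apply sum_le_sum
        intro c _
        rcases (univ.filter fun v => T v = c).eq_empty_or_nonempty with h | ⟨v₀, hv₀⟩
        · rw [h]; simp
        · have hv₀' : T v₀ = c := by simpa using hv₀
          have hc : ∀ v, T v = c → freq v = freq v₀ := by
            intro v hv
            funext b
            have := congrArg Fin.val (congrFun (hv.trans hv₀'.symm) b)
            simp only [hT] at this
            unfold freq
            rw [this]
          calc ∑ v with T v = c, wordProb v = ∑ v with T v = c, ∏ k, freq v₀ (v k) := by
                apply sum_congr rfl
                intro v hv
                have hv' : T v = c := by simpa using hv
                unfold wordProb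
                rw [hc v hv']
            _ ≤ ∑ v : Fin n → ZMod p, ∏ k, freq v₀ (v k) :=
                sum_le_univ_sum_of_nonneg fun v => prod_nonneg fun k _ => freq_nonneg _ _
            _ = (∑ b, freq v₀ b) ^ n := by rw [Fintype.sum_pow]
            _ = 1 := by rw [sum_freq, one_pow]
    _ = ((n : ℝ) + 1) ^ p := by simp [ZMod.card]

/-- Words close to equidistributed have empirical probability close to `p ^ (-n)`. -/
lemma wordProb_le_chi (hn : 0 < n) (v : Fin n → ZMod p) :
    wordProb v ≤ ((1 + chi (freq v)) / p) ^ n := by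
  have hn' : (0 : ℝ) < n := by exact_mod_cast hn
  have : Nonempty (Fin n) := ⟨⟨0, hn⟩⟩
  have hp0 : (0 : ℝ) < p := by exact_mod_cast (Fact.out : p.Prime).pos
  set m : ℝ := ∑ b, freq v b ^ 2 with hm
  have hm' : (1 + chi (freq v)) / p = m := by unfold chi; field_simp; ring
  have hm0 : 0 < m := by
    have h := chi_nonneg (freq v) (sum_freq v)
    rw [← hm']; positivity
  rw [hm']
  have hsum : ∑ k, freq v (v k) = n * m := by
    have : ∑ k, freq v (v k) = ∑ b, cnt v b * freq v b := by
      rw [← Finset.sum_fiberwise' univ v (freq v)]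
      simp [cnt]
    rw [this, hm, mul_sum]
    apply sum_congr rfl
    intro b _
    unfold freq
    rw [Fintype.card_fin]
    field_simp
  have h1 : ∏ k, (freq v (v k) / m) ≤ 1 := by
    calc ∏ k, (freq v (v k) / m) ≤ ∏ k, Real.exp (freq v (v k) / m - 1) :=
          prod_le_prod (fun k _ => div_nonneg (freq_nonneg _ _) hm0.le) fun k _ => by
            have := Real.add_one_le_exp (freq v (v k) / m - 1); linarith
      _ = Real.exp (∑ k, (freq v (v k) / m - 1)) := by rw [Real.exp_sum]
      _ = 1 := by
          rw [sum_sub_distrib, ← sum_div, hsum]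
          simp [hm0.ne']
  rw [prod_div_distrib, prod_const, card_univ, Fintype.card_fin, div_le_one (by positivity)] at h1
  exact h1

/-- Parseval: all nontrivial Fourier coefficients are controlled by `chi`. -/
lemma norm_sum_psi_sq_le (hn : 0 < n) (v : Fin n → ZMod p) (c : ZMod p) (hc : c ≠ 0) :
    ‖∑ k, (ZMod.stdAddChar (c * v k) : ℂ)‖ ^ 2 ≤ (n : ℝ) ^ 2 * chi (freq v) := by
  have hn' : (0 : ℝ) < n := by exact_mod_cast hn
  set F : ZMod p → ℝ := fun c => ‖∑ k, (ZMod.stdAddChar (c * v k) : ℂ)‖ ^ 2 with hF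
  have hpars : ∑ c, F c = p * ∑ b, (cnt v b : ℝ) ^ 2 := by
    have h1 : ((∑ c, F c : ℝ) : ℂ)
        = ∑ k, ∑ l, ∑ c : ZMod p, (ZMod.stdAddChar (c * (v k - v l)) : ℂ) := by
      have e1 : ∀ c, ((F c : ℝ) : ℂ) = ∑ k, ∑ l, (ZMod.stdAddChar (c * (v k - v l)) : ℂ) := by
        intro c
        simp only [hF]
        push_cast
        rw [← Complex.mul_conj', map_sum, sum_mul_sum]
        refine sum_congr rfl fun k _ => sum_congr rfl fun l _ => ?_
        rw [← AddChar.map_neg_eq_conj, ← AddChar.map_add_eq_mul]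
        congr 1
        ring
      rw [Complex.ofReal_sum]
      simp only [e1]
      rw [sum_comm]
      refine sum_congr rfl fun k _ => ?_
      rw [sum_comm]
    have h2 : ∀ k l, ∑ c : ZMod p, (ZMod.stdAddChar (c * (v k - v l)) : ℂ)
        = if v l = v k then (p : ℂ) else 0 := by
      intro k l
      rw [AddChar.sum_mulShift _ (ZMod.isPrimitive_stdAddChar p), ZMod.card]
      simp only [sub_eq_zero, eq_comm]
      split_ifs <;> simp
    have h3 : ∀ k, ∑ l, (if v l = v k then (p : ℂ) else 0) = p * cnt v (v k) := by
      intro k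
      rw [← sum_filter, sum_const, nsmul_eq_mul, mul_comm]
      rfl
    simp only [h2, h3] at h1
    have h4 : ∑ k, (p : ℂ) * cnt v (v k) = p * ∑ b, (cnt v b : ℂ) ^ 2 := by
      rw [← mul_sum]
      congr 1
      rw [← Finset.sum_fiberwise' univ v (fun b => (cnt v b : ℂ))]
      refine sum_congr rfl fun b _ => ?_
      rw [sum_const, nsmul_eq_mul, sq]
      rfl
    rw [h4] at h1
    exact_mod_cast h1
  have h0 : F 0 = (n : ℝ) ^ 2 := by simp [hF]
  have h5 : F 0 + F c ≤ ∑ c, F c := by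
    rw [← add_sum_erase univ F (mem_univ 0)]
    gcongr
    exact single_le_sum (f := F) (fun _ _ => sq_nonneg _) (mem_erase.mpr ⟨hc, mem_univ c⟩)
  have h6 : (n : ℝ) ^ 2 * chi (freq v) = p * ∑ b, (cnt v b : ℝ) ^ 2 - n ^ 2 := by
    unfold chi freq
    simp only [div_pow, Fintype.card_fin]
    rw [← sum_div]
    field_simp
  rw [h6]
  change F c ≤ _
  linarith

/-- The entropy bound for the count of one kernel vector. -/
lemma kerCount_le_rowSum (k : ℕ) (hn : 0 < n) (v : Fin n → ZMod p) (ρ : ZMod p → ℝ)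
    (hρ : ∀ a, 0 ≤ ρ a) (hρq : ∀ a, ρ a ^ (k + 3) = freq v a) :
    (kerCount (k + 3) v : ℝ) ≤ (3 * ((n * (k + 3) : ℕ) + 1)) ^ p * wordProb v * rowSum k ρ ^ n
      * (n * (k + 3)).factorial := by
  have h := weight_bound (lift (k + 3) v) (fun a => ρ a ^ (k + 2)) (fun a => pow_nonneg (hρ a) _)
    (fun w => ∀ j, ∑ i, w (j, i) = 0)
  have hs := sum_rows n (k + 3) (fun a => ρ a ^ (k + 2)) (fun r : Fin (k + 3) → ZMod p => ∑ i, r i = 0)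
  rw [hs] at h
  have hW : ∏ e, ρ (lift (k + 3) v e) ^ (k + 2) = wordProb v ^ (k + 2) := by
    rw [prod_lift (k + 3) v (fun a => ρ a ^ (k + 2))]
    unfold wordProb
    rw [← prod_pow, ← prod_pow]
    refine prod_congr rfl fun j _ => ?_
    rw [← hρq, ← pow_mul, ← pow_mul, mul_comm]
  rw [hW] at h
  have hK : (#{σ : Equiv.Perm (Fin n × Fin (k + 3)) | ∀ j, ∑ i, (lift (k + 3) v ∘ σ) (j, i) = 0})
      = kerCount (k + 3) v := rfl
  rw [hK] at h
  have hst := stab_le (lift (k + 3) v) (by simp [hn])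
  rw [wordProb_lift (by omega), Fintype.card_prod, Fintype.card_fin, Fintype.card_fin, ZMod.card] at hst
  have hR0 : 0 ≤ rowSum k ρ := sum_nonneg fun _ _ => prod_nonneg fun _ _ => pow_nonneg (hρ _) _
  have hW0 := wordProb_pos v
  have h' : wordProb v ^ (k + 2) * (kerCount (k + 3) v : ℝ) ≤ wordProb v ^ (k + 2) *
      ((3 * ((n * (k + 3) : ℕ) + 1)) ^ p * wordProb v * rowSum k ρ ^ n
      * (n * (k + 3)).factorial) := by
    calc wordProb v ^ (k + 2) * (kerCount (k + 3) v : ℝ)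
        ≤ stab (lift (k + 3) v) * rowSum k ρ ^ n := h
      _ ≤ ((3 * ((n * (k + 3) : ℕ) + 1)) ^ p * wordProb v ^ (k + 3) * (n * (k + 3)).factorial)
          * rowSum k ρ ^ n := by gcongr
      _ = _ := by ring
  exact le_of_mul_le_mul_left h' (by positivity)

/-- Fourier expansion of the count of one kernel vector. -/
lemma kerCount_fourier (d : ℕ) (v : Fin n → ZMod p) :
    (p : ℂ) ^ n * kerCount d v = ∑ u : Fin n → ZMod p, corr (lift d u) (lift d v) := by
  unfold corr
  rw [sum_comm]
  have h1 : ∀ σ : Equiv.Perm (Fin n × Fin d),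
      ∑ u : Fin n → ZMod p, (ZMod.stdAddChar (∑ e, lift d u e * lift d v (σ e)) : ℂ)
        = if ∀ k, ∑ i, v (σ (k, i)).1 = 0 then (p : ℂ) ^ n else 0 := by
    intro σ
    have h2 : ∀ u : Fin n → ZMod p, ∑ e, lift d u e * lift d v (σ e)
        = ∑ k, u k * ∑ i, v (σ (k, i)).1 := by
      intro u
      rw [Fintype.sum_prod_type]
      refine sum_congr rfl fun k _ => ?_
      rw [mul_sum]
      rfl
    simp only [h2]
    rw [orth, Fintype.card_fin]
    simp only [funext_iff, Pi.zero_apply]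
  simp only [h1]
  rw [← sum_filter, sum_const, nsmul_eq_mul, mul_comm]
  rfl

lemma norm_stdAddChar (a : ZMod p) : ‖(ZMod.stdAddChar a : ℂ)‖ = 1 :=
  AddChar.norm_apply _ _

/-- Subtracting a constant from one of the two words does not change the size of `corr`. -/
lemma norm_corr_sub {α : Type*} [Fintype α] [DecidableEq α] (h g : α → ZMod p) (c : ZMod p) :
    ‖corr (fun e => h e - c) g‖ = ‖corr h g‖ := by
  have : corr (fun e => h e - c) g = ZMod.stdAddChar (-(c * ∑ e, g e)) * corr h g := by
    unfold corr
    rw [mul_sum]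
    refine sum_congr rfl fun σ _ => ?_
    rw [← AddChar.map_add_eq_mul]
    congr 1
    rw [← Equiv.sum_comp σ g, mul_sum, ← sum_neg_distrib, ← sum_add_distrib]
    exact sum_congr rfl fun e _ => by ring
  rw [this, norm_mul, norm_stdAddChar, one_mul]

lemma corr_const (d : ℕ) (v : Fin n → ZMod p) (c : ZMod p) :
    corr (lift d fun _ => c) (lift d v)
      = (n * d).factorial * ZMod.stdAddChar (c * ((d : ZMod p) * ∑ k, v k)) := by
  unfold corr
  have : ∀ σ : Equiv.Perm (Fin n × Fin d), ∑ e, lift d (fun _ => c) e * lift d v (σ e)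
      = c * (d * ∑ k, v k) := by
    intro σ
    simp only [lift]
    rw [← mul_sum, Equiv.sum_comp σ (fun e => v e.1), Fintype.sum_prod_type]
    simp [mul_sum]
  simp only [this]
  simp [Fintype.card_perm]

end Kernel

/-! ### Kernel vectors concentrated on one letter -/

section Sparse

variable {n p : ℕ} [Fact p.Prime]

/-- A vector that equals a nonzero constant `c` off fewer than `n / d` coordinates is never in the
kernel: by pigeonhole some row only meets the value `c`, and `d c ≠ 0`. -/
lemma kerCount_eq_zero (d : ℕ) (hd : 0 < d) (hdp : d < p) (v : Fin n → ZMod p) (c : ZMod p)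
    (hc : c ≠ 0) (h : #{k | v k ≠ c} * d < n) : kerCount d v = 0 := by
  unfold kerCount
  rw [card_eq_zero, filter_eq_empty_iff]
  intro σ _ hσ
  set bad : Finset (Fin n × Fin d) := {e | v (σ e).1 ≠ c} with hbad
  have hb : #bad = #{k | v k ≠ c} * d := by
    have h1 : #bad = #((univ.filter fun k => v k ≠ c) ×ˢ (univ : Finset (Fin d))) := by
      apply card_bij (fun e _ => σ e)
      · intro e he; simpa [hbad] using he
      · intro a _ b _ hab; exact σ.injective hab
      · intro e he; exact ⟨σ.symm e, by simpa [hbad] using he, by simp⟩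
    rw [h1, card_product]; simp
  obtain ⟨k, hk⟩ : ∃ k, k ∉ bad.image Prod.fst := by
    by_contra hcon
    push Not at hcon
    have : #(univ : Finset (Fin n)) ≤ #bad :=
      (card_le_card fun k _ => hcon k).trans card_image_le
    rw [card_univ, Fintype.card_fin] at this
    omega
  have hrow : ∀ i, v (σ (k, i)).1 = c := by
    intro i
    by_contra hne
    exact hk (mem_image.mpr ⟨(k, i), by simpa [hbad] using hne, rfl⟩)
  have h0 := hσ k
  simp only [hrow, sum_const, card_univ, Fintype.card_fin, nsmul_eq_mul] at h0
  rcases mul_eq_zero.mp h0 with h1 | h1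
  · rw [ZMod.natCast_eq_zero_iff] at h1
    exact absurd (Nat.le_of_dvd hd h1) (by omega)
  · exact hc h1

/-- An exponential-moment bound for the number of words with `s` nonzero letters. -/
lemma card_supp_le (s : ℕ) (y : ℝ) (hy : 0 < y) :
    (#{v : Fin n → ZMod p | #{k | v k ≠ 0} = s} : ℝ) * y ^ s ≤ Real.exp (n * (p * y)) := by
  set x : ZMod p → ℝ := fun b => if b = 0 then 1 else y with hx
  have hx0 : ∀ b, 0 ≤ x b := fun b => by simp only [hx]; split_ifs <;> positivity
  have h1 : ∀ v : Fin n → ZMod p, ∏ k, x (v k) = y ^ #{k | v k ≠ 0} := by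
    intro v
    simp only [hx]
    rw [prod_ite]
    simp
  calc (#{v : Fin n → ZMod p | #{k | v k ≠ 0} = s} : ℝ) * y ^ s
      = ∑ v : Fin n → ZMod p with #{k | v k ≠ 0} = s, ∏ k, x (v k) := by
        rw [← nsmul_eq_mul, ← sum_const]
        refine sum_congr rfl fun v hv => ?_
        rw [h1, (mem_filter.mp hv).2]
    _ ≤ ∑ v : Fin n → ZMod p, ∏ k, x (v k) :=
        sum_le_univ_sum_of_nonneg fun v => prod_nonneg fun k _ => hx0 _
    _ = (∑ b, x b) ^ n := by rw [Fintype.sum_pow]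
    _ ≤ (Real.exp (p * y)) ^ n := by
        apply pow_le_pow_left₀ (sum_nonneg fun b _ => hx0 b)
        have : ∑ b, x b ≤ 1 + p * y := by
          calc ∑ b, x b ≤ ∑ b : ZMod p, ((if b = 0 then 1 else 0) + y) :=
                sum_le_sum fun b _ => by simp only [hx]; split_ifs <;> linarith
            _ = 1 + p * y := by rw [sum_add_distrib]; simp [ZMod.card]
        linarith [Real.add_one_le_exp ((p : ℝ) * y)]
    _ = _ := by rw [← Real.exp_nat_mul]

/-- A row with exactly one marked position cannot sum to zero; the others contribute
`1 + O(x ^ 2)` to the generating function. -/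
lemma sum_not_one_le (d : ℕ) (x : ℝ) (hx0 : 0 ≤ x) (hx1 : x ≤ 1) :
    ∑ r : Fin d → Bool with #{i | r i = true} ≠ 1, ∏ i, (if r i = true then x else 1)
      ≤ 1 + 2 ^ d * x ^ 2 := by
  calc ∑ r : Fin d → Bool with #{i | r i = true} ≠ 1, ∏ i, (if r i = true then x else 1)
      ≤ ∑ r : Fin d → Bool with #{i | r i = true} ≠ 1,
          ((if r = fun _ => false then 1 else 0) + x ^ 2) := by
        apply sum_le_sum
        intro r hr
        have hr1 : #{i | r i = true} ≠ 1 := (mem_filter.mp hr).2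
        have hp : ∏ i, (if r i = true then x else 1) = x ^ #{i | r i = true} := by
          rw [prod_ite]; simp
        rw [hp]
        split_ifs with h
        · subst h
          simp; positivity
        · have h0 : #{i | r i = true} ≠ 0 := by
            intro h0
            apply h
            rw [card_eq_zero, filter_eq_empty_iff] at h0
            funext i
            simpa using h0 (mem_univ i)
          rw [zero_add]
          exact pow_le_pow_of_le_one hx0 hx1 (by omega)
    _ ≤ ∑ r : Fin d → Bool, ((if r = fun _ => false then 1 else 0) + x ^ 2) :=
        sum_le_univ_sum_of_nonneg fun r => by split_ifs <;> positivity
    _ = 1 + 2 ^ d * x ^ 2 := by rw [sum_add_distrib]; simp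

/-- The nonzero letters of a rearranged kernel word never stand alone in their row; the
generating function with weight `x = √(s / n)` turns this into a bound for the count. -/
lemma kerCount_sparse (d : ℕ) (hd : 3 ≤ d) (v : Fin n → ZMod p) (s : ℕ) (hs : #{k | v k ≠ 0} = s)
    (hs0 : 0 < s) (hsn : 2 * s ≤ n) :
    (kerCount d v : ℝ) ≤ (Real.exp (2 ^ d) * 2 ^ d * √(s / n) ^ 3) ^ s * (n * d).factorial := by
  have hn : 0 < n := by omega
  have hn' : (0 : ℝ) < n := by exact_mod_cast hn
  have hs' : (0 : ℝ) < s := by exact_mod_cast hs0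
  have hd' : (0 : ℝ) < d := by positivity
  set x : ℝ := √(s / n) with hx
  have hxx : x ^ 2 = s / n := Real.sq_sqrt (by positivity)
  have hx0 : 0 < x := Real.sqrt_pos.mpr (by positivity)
  have hx1 : x ≤ 1 := by
    apply Real.sqrt_le_one.mpr
    rw [div_le_one hn']
    exact_mod_cast (by omega : s ≤ n)
  set g : Fin n → Bool := fun k => decide (v k ≠ 0) with hg
  have hcT : cnt g true = s := by rw [← hs]; unfold cnt; simp [hg]
  have hcF : cnt g false = n - s := by
    have := sum_cnt g
    simp only [Fintype.sum_bool, Fintype.card_fin] at this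
    omega
  set B : (Fin n × Fin d → Bool) → Prop := fun w => ∀ k, #{i | w (k, i) = true} ≠ 1 with hB
  have hK : kerCount d v ≤ #{σ : Equiv.Perm (Fin n × Fin d) | B (lift d g ∘ σ)} := by
    apply card_le_card
    intro σ hσ
    have hσ' : ∀ k, ∑ i, v (σ (k, i)).1 = 0 := (mem_filter.mp hσ).2
    refine mem_filter.mpr ⟨mem_univ _, fun k hk => ?_⟩
    obtain ⟨i₀, hi₀⟩ := card_eq_one.mp hk
    have hmem : ∀ i, v (σ (k, i)).1 ≠ 0 ↔ i = i₀ := by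
      intro i
      have := Finset.ext_iff.mp hi₀ i
      simpa [lift, hg] using this
    have h0 := hσ' k
    rw [sum_eq_single i₀ (fun i _ hi => by
      by_contra hne; exact hi ((hmem i).mp hne)) (by simp)] at h0
    exact (hmem i₀).mpr rfl h0
  have h := weight_bound (lift d g) (fun b => if b = true then x else 1)
    (fun b => by split_ifs <;> positivity) B
  rw [sum_rows n d (fun b => if b = true then x else 1)
    (fun r : Fin d → Bool => #{i | r i = true} ≠ 1),
    prod_comp_eq (lift d g) (fun b => if b = true then x else 1)] at h
  simp only [Fintype.prod_bool, cnt_lift, hcT, hcF, if_true, Bool.false_eq_true, if_false, one_pow,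
    mul_one] at h
  have hst : (stab (lift d g) : ℝ) * ((n * d).choose (s * d)) = (n * d).factorial := by
    rw [stab_eq]
    simp only [Fintype.prod_bool, cnt_lift, hcT, hcF]
    rw [Nat.sub_mul]
    rw [← Nat.choose_mul_factorial_mul_factorial (n := n * d) (k := s * d)
      (Nat.mul_le_mul_right _ (by omega))]
    push_cast
    ring
  -- `choose (n d) (s d) ≥ (n / (2 s)) ^ (s d)`
  have hch : ((n : ℝ) / (2 * s)) ^ (s * d) ≤ ((n * d).choose (s * d) : ℝ) := by
    have h1 : (((n * d + 1 - s * d : ℕ) : ℝ) ^ (s * d)) / (s * d).factorial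
        ≤ ((n * d).choose (s * d) : ℝ) := Nat.pow_le_choose _ _
    refine le_trans ?_ h1
    have h2 : ((s * d).factorial : ℝ) ≤ ((s * d : ℕ) : ℝ) ^ (s * d) := by
      exact_mod_cast Nat.factorial_le_pow _
    calc ((n : ℝ) / (2 * s)) ^ (s * d) ≤ (((n * d + 1 - s * d : ℕ) : ℝ) / ((s * d : ℕ) : ℝ)) ^ (s * d) := by
          apply pow_le_pow_left₀ (by positivity)
          rw [div_le_div_iff₀ (by positivity) (by positivity)]
          have h3 : n * d ≤ (n * d + 1 - s * d) * 2 := by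
            have : 2 * s * d ≤ n * d := Nat.mul_le_mul_right _ hsn
            have e : 2 * s * d = s * d + s * d := by ring
            omega
          have h4 : (n : ℝ) * d ≤ ((n * d + 1 - s * d : ℕ) : ℝ) * 2 := by exact_mod_cast h3
          push_cast
          nlinarith
      _ = ((n * d + 1 - s * d : ℕ) : ℝ) ^ (s * d) / ((s * d : ℕ) : ℝ) ^ (s * d) := div_pow _ _ _
      _ ≤ _ := by gcongr
  have hPhi : (∑ r : Fin d → Bool with #{i | r i = true} ≠ 1, ∏ i, (if r i = true then x else 1)) ^ n
      ≤ Real.exp (2 ^ d) ^ s := by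
    calc _ ≤ (Real.exp (2 ^ d * x ^ 2)) ^ n := by
          apply pow_le_pow_left₀ (sum_nonneg fun r _ => prod_nonneg fun i _ => by
            split_ifs <;> positivity)
          refine (sum_not_one_le d x hx0.le hx1).trans ?_
          linarith [Real.add_one_le_exp ((2:ℝ) ^ d * x ^ 2)]
      _ = Real.exp (2 ^ d) ^ s := by
          rw [← Real.exp_nat_mul, ← Real.exp_nat_mul, hxx]
          congr 1
          field_simp
  have hst0 : (0 : ℝ) < stab (lift d g) := by exact_mod_cast stab_pos _
  have hnf : (0 : ℝ) < (n * d).factorial := by exact_mod_cast Nat.factorial_pos _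
  have hxinv : (n : ℝ) / (2 * s) = (2 * x ^ 2)⁻¹ := by rw [hxx]; field_simp
  have hst2 : (stab (lift d g) : ℝ) ≤ (n * d).factorial * (2 * x ^ 2) ^ (s * d) := by
    rw [hxinv, inv_pow] at hch
    have hpos : 0 < (2 * x ^ 2) ^ (s * d) := by positivity
    have : (stab (lift d g) : ℝ) * ((2 * x ^ 2) ^ (s * d))⁻¹ ≤ (n * d).factorial := by
      rw [← hst]; gcongr
    rwa [← div_eq_mul_inv, div_le_iff₀ hpos] at this
  have h5 : x ^ (s * d) * (kerCount d v : ℝ)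
      ≤ x ^ (s * d) * ((Real.exp (2 ^ d) * 2 ^ d * x ^ d) ^ s * (n * d).factorial) := by
    calc x ^ (s * d) * (kerCount d v : ℝ)
        ≤ x ^ (s * d) * (#{σ : Equiv.Perm (Fin n × Fin d) | B (lift d g ∘ σ)} : ℝ) := by
          gcongr
      _ ≤ _ := h
      _ ≤ ((n * d).factorial * (2 * x ^ 2) ^ (s * d)) * Real.exp (2 ^ d) ^ s := by
          gcongr
      _ = _ := by
          rw [mul_pow, mul_pow, ← pow_mul, ← pow_mul, mul_pow, ← pow_mul]
          rw [mul_comm s d]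
          ring
  have h6 := le_of_mul_le_mul_left h5 (by positivity)
  refine h6.trans ?_
  have h7 : x ^ d ≤ x ^ 3 := pow_le_pow_of_le_one hx0.le hx1 hd
  gcongr

/-- Sparse vectors contribute negligibly to the first moment. -/
lemma sparse_sum (d : ℕ) (hd : 3 ≤ d) (p : ℕ) [Fact p.Prime] :
    ∃ ε : ℝ, 0 < ε ∧ ε ≤ 1 ∧ ε * d < 1 ∧ ∀ η : ℝ, 0 < η → ∀ᶠ n : ℕ in Filter.atTop,
      ∑ v : Fin n → ZMod p with v ≠ 0 ∧ (#{k | v k ≠ 0} : ℝ) ≤ ε * n, (kerCount d v : ℝ)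
        ≤ η * (n * d).factorial := by
  set C : ℝ := Real.exp p * (Real.exp (2 ^ d) * 2 ^ d) with hC
  have hC0 : 0 < C := by positivity
  have hd' : (0:ℝ) < d := by positivity
  have hd1 : (1:ℝ) ≤ d := by exact_mod_cast (by omega : 1 ≤ d)
  -- the first bound makes the sum over the support size geometric, the second gives `ε d < 1`
  refine ⟨min ((1 / (4 * C)) ^ 2) (1 / (2 * d)), by positivity, ?_, ?_, ?_⟩
  · refine (min_le_right _ _).trans ?_
    rw [div_le_one (by positivity)]; linarith
  · calc min ((1 / (4 * C)) ^ 2) (1 / (2 * (d : ℝ))) * d ≤ 1 / (2 * d) * d := by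
          gcongr; exact min_le_right _ _
      _ < 1 := by field_simp; norm_num
  set ε := min ((1 / (4 * C)) ^ 2) (1 / (2 * (d:ℝ))) with hε
  intro η hη
  have hlim : Filter.Tendsto (fun n : ℕ => 8 * C / √(n : ℝ)) Filter.atTop (nhds 0) :=
    Filter.Tendsto.div_atTop tendsto_const_nhds
      (Real.tendsto_sqrt_atTop.comp tendsto_natCast_atTop_atTop)
  filter_upwards [hlim.eventually (gt_mem_nhds hη), Filter.eventually_gt_atTop 0] with n hnη hn
  have hn' : (0 : ℝ) < n := by exact_mod_cast hn
  set Nf : ℝ := ((n * d).factorial : ℝ) with hNf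
  have hNf0 : 0 < Nf := by rw [hNf]; exact_mod_cast Nat.factorial_pos _
  -- group the vectors by the size `s` of their support
  have hlevel : ∀ s ∈ (Icc 1 n).filter (fun s : ℕ => (s : ℝ) ≤ ε * n),
      ∑ v : Fin n → ZMod p with #{k | v k ≠ 0} = s, (kerCount d v : ℝ)
        ≤ (4 * C / √(n:ℝ) * (1 / 2) ^ s) * Nf := by
    intro s hs
    obtain ⟨hs1, hsε⟩ := mem_filter.mp hs
    have hs0 : 0 < s := (mem_Icc.mp hs1).1
    have hs' : (0 : ℝ) < s := by exact_mod_cast hs0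
    have hs1' : (1 : ℝ) ≤ s := by exact_mod_cast hs0
    have hsn : 2 * s ≤ n := by
      have h1 : (s : ℝ) ≤ 1 / (2 * d) * n := hsε.trans (by gcongr; exact min_le_right _ _)
      have h2 : 1 / (2 * (d:ℝ)) ≤ 1 / 2 := by gcongr; linarith
      have h3 : (s : ℝ) ≤ 1 / 2 * n := h1.trans (by gcongr)
      have : (2 * s : ℝ) ≤ n := by linarith
      exact_mod_cast this
    set x : ℝ := √(s / n) with hx
    have hxx : x ^ 2 = s / n := Real.sq_sqrt (by positivity)
    have hx0 : 0 < x := Real.sqrt_pos.mpr (by positivity)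
    have hxC : C * x ≤ 1 / 4 := by
      have : x ≤ 1 / (4 * C) := by
        rw [hx, Real.sqrt_le_left (by positivity), div_le_iff₀ hn']
        exact hsε.trans (by gcongr; exact min_le_left _ _)
      calc C * x ≤ C * (1 / (4 * C)) := by gcongr
        _ = 1 / 4 := by field_simp
    have hxs : x ≤ s / √(n:ℝ) := by
      rw [hx, Real.sqrt_div (by positivity)]
      gcongr
      rw [Real.sqrt_le_left (by positivity)]
      nlinarith
    have hcard := card_supp_le (n := n) (p := p) s (x ^ 2) (by positivity)
    have hcard' : (#{v : Fin n → ZMod p | #{k | v k ≠ 0} = s} : ℝ) * (x ^ 2) ^ s ≤ Real.exp p ^ s := by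
      refine hcard.trans (le_of_eq ?_)
      rw [← Real.exp_nat_mul, hxx]
      congr 1
      field_simp
    calc ∑ v : Fin n → ZMod p with #{k | v k ≠ 0} = s, (kerCount d v : ℝ)
        ≤ ∑ v : Fin n → ZMod p with #{k | v k ≠ 0} = s,
            (Real.exp (2 ^ d) * 2 ^ d * x ^ 3) ^ s * Nf :=
          sum_le_sum fun v hv => kerCount_sparse d hd v s (mem_filter.mp hv).2 hs0 hsn
      _ = ((#{v : Fin n → ZMod p | #{k | v k ≠ 0} = s} : ℝ) * (x ^ 2) ^ s)
            * (Real.exp (2 ^ d) * 2 ^ d * x) ^ s * Nf := by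
          rw [sum_const, nsmul_eq_mul]
          have : Real.exp (2 ^ d) * 2 ^ d * x ^ 3 = x ^ 2 * (Real.exp (2 ^ d) * 2 ^ d * x) := by ring
          rw [this, mul_pow (x ^ 2)]
          ring
      _ ≤ Real.exp p ^ s * (Real.exp (2 ^ d) * 2 ^ d * x) ^ s * Nf := by gcongr
      _ = (C * x) ^ s * Nf := by rw [← mul_pow, hC]; ring
      _ ≤ (4 * C / √(n:ℝ) * (1 / 2) ^ s) * Nf := by
          gcongr
          obtain ⟨j, rfl⟩ := Nat.exists_eq_succ_of_ne_zero hs0.ne'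
          calc (C * x) ^ (j + 1) = C * x * (C * x) ^ j := by ring
            _ ≤ C * (((j + 1 : ℕ) : ℝ) / √(n:ℝ)) * (1 / 4) ^ j := by gcongr
            _ ≤ C * (2 ^ (j + 1) / √(n:ℝ)) * (1 / 4) ^ j := by
                gcongr
                exact_mod_cast (Nat.lt_two_pow_self (n := j + 1)).le
            _ = 4 * C / √(n:ℝ) * (1 / 2) ^ (j + 1) := by
                have e : (1 / 4 : ℝ) ^ j = (1 / 2) ^ j * (1 / 2) ^ j := by
                  rw [← mul_pow]; norm_num
                have e2 : (2 : ℝ) ^ j * (1 / 2) ^ j = 1 := by rw [← mul_pow]; norm_num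
                rw [e, pow_succ, pow_succ]
                linear_combination (2 * C / √(n:ℝ) * (1 / 2) ^ j) * e2
  calc ∑ v : Fin n → ZMod p with v ≠ 0 ∧ (#{k | v k ≠ 0} : ℝ) ≤ ε * n, (kerCount d v : ℝ)
      = ∑ s ∈ (Icc 1 n).filter (fun s : ℕ => (s : ℝ) ≤ ε * n),
          ∑ v ∈ (univ.filter fun v : Fin n → ZMod p => v ≠ 0 ∧ (#{k | v k ≠ 0} : ℝ) ≤ ε * n) with
            #{k | v k ≠ 0} = s, (kerCount d v : ℝ) := by
        rw [sum_fiberwise_of_maps_to]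
        intro v hv
        obtain ⟨hv0, hvε⟩ := (mem_filter.mp hv).2
        refine mem_filter.mpr ⟨mem_Icc.mpr ⟨?_, ?_⟩, hvε⟩
        · rw [Nat.one_le_iff_ne_zero]
          intro h0
          apply hv0
          rw [card_eq_zero, filter_eq_empty_iff] at h0
          funext k
          simpa using h0 (mem_univ k)
        · exact (card_filter_le _ _).trans (by simp)
    _ ≤ ∑ s ∈ (Icc 1 n).filter (fun s : ℕ => (s : ℝ) ≤ ε * n), (4 * C / √(n:ℝ) * (1 / 2) ^ s) * Nf := by
        apply sum_le_sum
        intro s hs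
        refine le_trans ?_ (hlevel s hs)
        apply sum_le_sum_of_subset_of_nonneg
        · intro v hv
          exact mem_filter.mpr ⟨mem_univ _, (mem_filter.mp hv).2⟩
        · intros; positivity
    _ = 4 * C / √(n:ℝ) * (∑ s ∈ (Icc 1 n).filter (fun s : ℕ => (s : ℝ) ≤ ε * n), (1 / 2) ^ s) * Nf := by
        rw [mul_sum, sum_mul]
    _ ≤ 4 * C / √(n:ℝ) * 2 * Nf := by
        gcongr
        refine le_trans ?_ tsum_geometric_two.le
        exact Summable.sum_le_tsum _ (fun _ _ => by positivity) summable_geometric_two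
    _ = 8 * C / √(n:ℝ) * Nf := by ring
    _ ≤ η * Nf := by gcongr

end Sparse

/-! ### Kernel vectors far from equidistribution -/

lemma poly_factor_le (k p n : ℕ) (hn : 0 < n) :
    (3 * ((n * (k + 3) : ℕ) + 1) : ℝ) ^ p * ((n : ℝ) + 1) ^ p
      ≤ (6 * (k + 4 : ℕ)) ^ p * (n : ℝ) ^ (2 * p) := by
  have hn1 : (1 : ℝ) ≤ n := by exact_mod_cast hn
  rw [pow_mul, ← mul_pow, ← mul_pow]
  apply pow_le_pow_left₀ (by positivity)
  push_cast
  have h1 : (n : ℝ) * (k + 3) + 1 ≤ n * (k + 4) := by nlinarith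
  calc 3 * ((n : ℝ) * (k + 3) + 1) * (n + 1) ≤ 3 * (n * (k + 4)) * (2 * n) := by
        gcongr; linarith
    _ = _ := by ring

/-- Vectors without a dominant letter that deviate noticeably from equidistribution contribute
negligibly to the first moment. -/
lemma unbalanced_sum (k p : ℕ) [Fact p.Prime] (ε : ℝ) (hε : 0 < ε) (hε1 : ε ≤ 1) :
    ∃ K : ℕ, 1 ≤ K ∧ ∀ η : ℝ, 0 < η → ∀ᶠ n : ℕ in Filter.atTop,
      ∑ v : Fin n → ZMod p with (∀ a, freq v a ≤ 1 - ε) ∧ K * Real.log n < n * chi (freq v),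
        (kerCount (k + 3) v : ℝ) ≤ η * (n * (k + 3)).factorial := by
  obtain ⟨c, hc, hcΦ⟩ := exists_rowSum_le p k ε hε hε1
  -- `(1 - c χ²) ^ n ≤ n ^ (-c K)` has to beat the polynomial factor `O(n ^ (2 p))`
  obtain ⟨K, hK⟩ := exists_nat_ge ((2 * p + 1 : ℕ) / c)
  refine ⟨max K 1, le_max_right _ _, fun η hη => ?_⟩
  have hcK : ((2 * p + 1 : ℕ) : ℝ) ≤ c * (max K 1 : ℕ) := by
    rw [div_le_iff₀ hc] at hK
    have : (K : ℝ) ≤ (max K 1 : ℕ) := by exact_mod_cast le_max_left _ _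
    nlinarith
  set K' := max K 1
  set C : ℝ := (6 * (k + 4 : ℕ)) ^ p with hC
  have hlim : Filter.Tendsto (fun n : ℕ => C / (n : ℝ)) Filter.atTop (nhds 0) :=
    tendsto_const_div_atTop_nhds_zero_nat C
  filter_upwards [hlim.eventually (gt_mem_nhds hη), Filter.eventually_gt_atTop 0] with n hnη hn
  have hn' : (0 : ℝ) < n := by exact_mod_cast hn
  have hn1 : (1 : ℝ) ≤ n := by exact_mod_cast hn
  have : Nonempty (Fin n) := ⟨⟨0, hn⟩⟩
  set Nf : ℝ := ((n * (k + 3)).factorial : ℝ) with hNf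
  have hNf0 : 0 < Nf := by rw [hNf]; exact_mod_cast Nat.factorial_pos _
  set P : ℝ := (3 * ((n * (k + 3) : ℕ) + 1)) ^ p with hP
  have hv : ∀ v ∈ univ.filter (fun v : Fin n → ZMod p =>
      (∀ a, freq v a ≤ 1 - ε) ∧ K' * Real.log n < n * chi (freq v)),
      (kerCount (k + 3) v : ℝ) ≤ P * ((n : ℝ) ^ (2 * p + 1))⁻¹ * Nf * wordProb v := by
    intro v hv
    obtain ⟨hvε, hvK⟩ := (mem_filter.mp hv).2
    set ρ : ZMod p → ℝ := fun a => freq v a ^ (((k + 3 : ℕ) : ℝ)⁻¹) with hρ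
    have hρ0 : ∀ a, 0 ≤ ρ a := fun a => Real.rpow_nonneg (freq_nonneg _ _) _
    have hρq : ∀ a, ρ a ^ (k + 3) = freq v a := fun a =>
      Real.rpow_inv_natCast_pow (freq_nonneg _ _) (by omega)
    have hΦ := hcΦ (freq v) ρ hρ0 hρq (sum_freq v) hvε
    have hR0 : 0 ≤ rowSum k ρ := sum_nonneg fun _ _ => prod_nonneg fun _ _ => pow_nonneg (hρ0 _) _
    have hpow : rowSum k ρ ^ n ≤ ((n : ℝ) ^ (2 * p + 1))⁻¹ := by
      calc rowSum k ρ ^ n ≤ (Real.exp (-(c * chi (freq v)))) ^ n := by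
            apply pow_le_pow_left₀ hR0
            linarith [Real.add_one_le_exp (-(c * chi (freq v)))]
        _ = Real.exp (-(c * (n * chi (freq v)))) := by
            rw [← Real.exp_nat_mul]; congr 1; ring
        _ ≤ Real.exp (-((2 * p + 1 : ℕ) * Real.log n)) := by
            apply Real.exp_le_exp.mpr
            apply neg_le_neg
            have hlog : 0 ≤ Real.log n := Real.log_nonneg hn1
            calc ((2 * p + 1 : ℕ) : ℝ) * Real.log n ≤ c * K' * Real.log n := by gcongr
              _ = c * (K' * Real.log n) := by ring
              _ ≤ _ := by gcongr
        _ = _ := by rw [Real.exp_neg, Real.exp_nat_mul, Real.exp_log hn']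
    have hW0 := (wordProb_pos v).le
    calc (kerCount (k + 3) v : ℝ) ≤ P * wordProb v * rowSum k ρ ^ n * Nf :=
          kerCount_le_rowSum k hn v ρ hρ0 hρq
      _ ≤ P * wordProb v * ((n : ℝ) ^ (2 * p + 1))⁻¹ * Nf := by gcongr
      _ = _ := by ring
  calc _ ≤ ∑ v : Fin n → ZMod p with (∀ a, freq v a ≤ 1 - ε) ∧ K' * Real.log n < n * chi (freq v),
          P * ((n : ℝ) ^ (2 * p + 1))⁻¹ * Nf * wordProb v := sum_le_sum hv
    _ ≤ ∑ v : Fin n → ZMod p, P * ((n : ℝ) ^ (2 * p + 1))⁻¹ * Nf * wordProb v :=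
        sum_le_univ_sum_of_nonneg fun v => by have := (wordProb_pos v).le; positivity
    _ = P * ((n : ℝ) ^ (2 * p + 1))⁻¹ * Nf * ∑ v : Fin n → ZMod p, wordProb v := by rw [mul_sum]
    _ ≤ P * ((n : ℝ) ^ (2 * p + 1))⁻¹ * Nf * ((n : ℝ) + 1) ^ p := by
        gcongr; exact sum_wordProb_le hn
    _ = P * ((n : ℝ) + 1) ^ p * ((n : ℝ) ^ (2 * p + 1))⁻¹ * Nf := by ring
    _ ≤ C * (n : ℝ) ^ (2 * p) * ((n : ℝ) ^ (2 * p + 1))⁻¹ * Nf := by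
        exact mul_le_mul_of_nonneg_right (mul_le_mul_of_nonneg_right (poly_factor_le k p n hn)
          (by positivity)) hNf0.le
    _ = C / n * Nf := by
        rw [pow_succ]
        field_simp
    _ ≤ η * Nf := by gcongr

/-! ### Kernel vectors close to equidistribution -/

section Balanced

variable {n p : ℕ} [Fact p.Prime]

/-- Frequencies `u` with few nonzero letters: the sampled values are nearly independent. -/
lemma corr_le_few (k : ℕ) (L z : ℝ) (hn : 0 < n) (hL : 1 ≤ L) (hz : z = 2 * √(L / n)) (hz1 : z ≤ 1)
    (u v : Fin n → ZMod p) (hv : n * chi (freq v) ≤ L) (s S : ℕ) (hs : #{j | u j ≠ 0} = s)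
    (hsS : s ≤ S) (hSn : 2 * S ≤ n) :
    ‖corr (lift (k + 3) u) (lift (k + 3) v)‖
      ≤ (S * (k + 3)).factorial * (z ^ 3) ^ s * (n * (k + 3)).factorial := by
  have hn' : (0 : ℝ) < n := by exact_mod_cast hn
  have hn1 : (1 : ℝ) ≤ n := by exact_mod_cast hn
  set D : ℝ := ((k + 3 : ℕ) : ℝ) * √(n * L) with hD
  have hd1 : (1 : ℝ) ≤ ((k + 3 : ℕ) : ℝ) := by exact_mod_cast (by omega : 1 ≤ k + 3)
  have hsq1 : 1 ≤ √((n : ℝ) * L) := by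
    rw [Real.one_le_sqrt]; nlinarith
  have hD1 : 1 ≤ D := by rw [hD]; nlinarith
  have hcard : (Fintype.card (Fin n × Fin (k + 3)) : ℝ) = n * ((k + 3 : ℕ) : ℝ) := by
    simp
  have hDN : (Fintype.card (Fin n × Fin (k + 3)) : ℝ) ≤ D ^ 2 := by
    rw [hcard, hD, mul_pow, Real.sq_sqrt (by positivity)]
    calc (n : ℝ) * ((k + 3 : ℕ) : ℝ) = ((k + 3 : ℕ) : ℝ) * 1 * (n * 1) := by ring
      _ ≤ ((k + 3 : ℕ) : ℝ) * ((k + 3 : ℕ) : ℝ) * (n * L) := by gcongr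
      _ = _ := by ring
  have hDc : ∀ c : ZMod p, c ≠ 0 →
      ‖∑ e, (ZMod.stdAddChar (c * lift (k + 3) v e) : ℂ)‖ ≤ D := by
    intro c hc
    have h1 : ∑ e, (ZMod.stdAddChar (c * lift (k + 3) v e) : ℂ)
        = ((k + 3 : ℕ) : ℂ) * ∑ j, (ZMod.stdAddChar (c * v j) : ℂ) := by
      rw [Fintype.sum_prod_type, mul_sum]
      simp [lift]
    rw [h1, norm_mul, Complex.norm_natCast, hD]
    refine mul_le_mul_of_nonneg_left ?_ (Nat.cast_nonneg _)
    apply Real.le_sqrt_of_sq_le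
    refine (norm_sum_psi_sq_le hn v c hc).trans ?_
    nlinarith
  have hsupp : #{e | lift (k + 3) u e ≠ 0} = s * (k + 3) := by
    have : (univ.filter fun e : Fin n × Fin (k + 3) => lift (k + 3) u e ≠ 0)
        = (univ.filter fun j => u j ≠ 0) ×ˢ (univ : Finset (Fin (k + 3))) := by
      ext e
      refine mem_filter.trans ?_
      simp [lift]
    rw [this, card_product, hs]
    simp
  have h := corr_le_of_small (lift (k + 3) u) (lift (k + 3) v) D hD1 hDN hDc (s * (k + 3)) hsupp
    (by simp only [Fintype.card_prod, Fintype.card_fin]; nlinarith)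
  have hzD : 2 * D / (Fintype.card (Fin n × Fin (k + 3)) : ℝ) = z := by
    rw [hcard, hD, hz]
    have : √((n : ℝ) * L) = n * √(L / n) := by
      rw [← Real.sqrt_sq hn'.le, ← Real.sqrt_mul (by positivity), Real.sqrt_sq hn'.le]
      congr 1
      field_simp
    rw [this]
    field_simp
  rw [hzD] at h
  have hz0 : 0 ≤ z := by rw [hz]; positivity
  refine h.trans ?_
  have hNe : Fintype.card (Fin n × Fin (k + 3)) = n * (k + 3) := by simp
  rw [hNe, ← pow_mul]
  have h1 : ((s * (k + 3)).factorial : ℝ) ≤ (S * (k + 3)).factorial := by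
    exact_mod_cast Nat.factorial_le (Nat.mul_le_mul_right _ hsS)
  have h2 : z ^ (s * (k + 3)) ≤ z ^ (3 * s) := pow_le_pow_of_le_one hz0 hz1 (by nlinarith)
  gcongr

/-- Frequencies `u` whose empirical probability is polynomially small: the second-moment bound
`corr_sq_le` suffices, `n ^ (K d)` being the loss from `v` not being exactly equidistributed. -/
lemma corr_le_many (k K S : ℕ) (hn : 0 < n)
    (u v : Fin n → ZMod p) (hv : n * chi (freq v) ≤ K * Real.log n)
    (hu : wordProb u ≤ (((n : ℝ) ^ S)⁻¹) ^ 2) :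
    ‖corr (lift (k + 3) u) (lift (k + 3) v)‖
      ≤ (3 * ((n * (k + 3) : ℕ) + 1)) ^ p * n ^ (K * (k + 3)) * ((n : ℝ) ^ S)⁻¹ * wordProb u
        * (n * (k + 3)).factorial := by
  have hn' : (0 : ℝ) < n := by exact_mod_cast hn
  have hn1 : (1 : ℝ) ≤ n := by exact_mod_cast hn
  have hp0 : (0 : ℝ) < p := by exact_mod_cast (Fact.out : p.Prime).pos
  have : Nonempty (Fin n) := ⟨⟨0, hn⟩⟩
  set P : ℝ := (3 * ((n * (k + 3) : ℕ) + 1)) ^ p with hP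
  set Nf : ℝ := ((n * (k + 3)).factorial : ℝ) with hNf
  have hchi := chi_nonneg (freq v) (sum_freq v)
  have hst : ∀ w : Fin n → ZMod p,
      (stab (lift (k + 3) w) : ℝ) ≤ P * wordProb w ^ (k + 3) * Nf := by
    intro w
    have hst := stab_le (lift (k + 3) w) (by simp [hn])
    rwa [wordProb_lift (by omega), Fintype.card_prod, Fintype.card_fin, Fintype.card_fin,
      ZMod.card] at hst
  have hQv : wordProb v ≤ (n : ℝ) ^ K / p ^ n := by
    refine (wordProb_le_chi hn v).trans ?_
    rw [div_pow]
    gcongr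
    calc (1 + chi (freq v)) ^ n ≤ (Real.exp (chi (freq v))) ^ n := by
          apply pow_le_pow_left₀ (by positivity)
          linarith [Real.add_one_le_exp (chi (freq v))]
      _ = Real.exp (n * chi (freq v)) := by rw [← Real.exp_nat_mul]
      _ ≤ Real.exp (K * Real.log n) := Real.exp_le_exp.mpr hv
      _ = _ := by rw [Real.exp_nat_mul, Real.exp_log hn']
  have hQu0 := (wordProb_pos u).le
  have hQv0 := (wordProb_pos v).le
  have h := corr_sq_le (lift (k + 3) u) (lift (k + 3) v)
  have hNe : Fintype.card (Fin n × Fin (k + 3)) = n * (k + 3) := by simp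
  rw [hNe] at h
  apply abs_le_of_sq_le_sq' _ (by positivity) |>.2
  have hQu3 : wordProb u ^ (k + 3) ≤ wordProb u ^ 2 * (((n : ℝ) ^ S)⁻¹) ^ 2 := by
    calc wordProb u ^ (k + 3) ≤ wordProb u ^ 3 :=
          pow_le_pow_of_le_one hQu0 (wordProb_le_one u) (by omega)
      _ = wordProb u ^ 2 * wordProb u := by ring
      _ ≤ _ := by gcongr
  calc ‖corr (lift (k + 3) u) (lift (k + 3) v)‖ ^ 2
      ≤ (p : ℝ) ^ (n * (k + 3)) * stab (lift (k + 3) u) * stab (lift (k + 3) v) := h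
    _ ≤ (p : ℝ) ^ (n * (k + 3)) * (P * wordProb u ^ (k + 3) * Nf) * (P * wordProb v ^ (k + 3) * Nf) := by
        gcongr
        · exact hst u
        · exact hst v
    _ ≤ (p : ℝ) ^ (n * (k + 3)) * (P * (wordProb u ^ 2 * (((n : ℝ) ^ S)⁻¹) ^ 2) * Nf)
          * (P * ((n : ℝ) ^ K / p ^ n) ^ (k + 3) * Nf) := by
        gcongr
    _ = P ^ 2 * n ^ (K * (k + 3)) * (((n : ℝ) ^ S)⁻¹) ^ 2 * wordProb u ^ 2 * Nf ^ 2 := by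
        rw [div_pow, ← pow_mul, ← pow_mul]
        field_simp
    _ ≤ P ^ 2 * (n ^ (K * (k + 3)) * n ^ (K * (k + 3))) * (((n : ℝ) ^ S)⁻¹) ^ 2 * wordProb u ^ 2 * Nf ^ 2 := by
        gcongr
        exact le_mul_of_one_le_left (by positivity) (one_le_pow₀ hn1)
    _ = _ := by ring

/-- If `0` is a most frequent letter and there are many nonzero letters, the empirical probability
is smaller than any prescribed power. -/
lemma wordProb_le_of_supp (S : ℕ) (hn : 0 < n)
    (hexp : √(n : ℝ) ^ (4 * S) * Real.exp (-√(n : ℝ)) ≤ 1)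
    (u : Fin n → ZMod p) (hmaj : ∀ a, cnt u a ≤ cnt u 0) (s : ℕ) (hs : #{j | u j ≠ 0} = s)
    (hsS : 4 * S ≤ s) : wordProb u ≤ (((n : ℝ) ^ S)⁻¹) ^ 2 := by
  have hn' : (0 : ℝ) < n := by exact_mod_cast hn
  have hcnt : cnt u 0 + s = n := by
    rw [← hs]
    have := card_filter_add_card_filter_not (s := (univ : Finset (Fin n))) (fun j => u j = 0)
    simpa [cnt] using this
  have hf0 : freq u 0 = 1 - s / n := by
    unfold freq
    rw [Fintype.card_fin, eq_sub_iff_add_eq, ← add_div, div_eq_one_iff_eq hn'.ne']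
    exact_mod_cast hcnt
  have hsn : (s : ℝ) ≤ n := by exact_mod_cast (by omega : s ≤ n)
  -- for `s ≤ √n` the nonzero letters are rare enough; for `s > √n` even the letter `0`, the most
  -- frequent one, has frequency at most `1 - 1 / √n`
  rcases le_or_gt ((s : ℝ) ^ 2) n with hle | hgt
  · have h1 : ∀ j, freq u (u j) ≤ if u j ≠ 0 then (s : ℝ) / n else 1 := by
      intro j
      split_ifs with h
      · unfold freq
        rw [Fintype.card_fin]
        gcongr
        rw [← hs]
        apply card_le_card
        intro i hi
        have : u i = u j := (mem_filter.mp hi).2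
        simp [this, h]
      · exact freq_le_one _ _
    calc wordProb u ≤ ∏ j, if u j ≠ 0 then (s : ℝ) / n else 1 :=
          prod_le_prod (fun _ _ => freq_nonneg _ _) fun j _ => h1 j
      _ = ((s : ℝ) / n) ^ s := by rw [prod_ite, prod_const, hs]; simp
      _ ≤ ((s : ℝ) / n) ^ (4 * S) :=
          pow_le_pow_of_le_one (by positivity) (by rw [div_le_one hn']; exact hsn) hsS
      _ = (((s : ℝ) / n) ^ 2) ^ (2 * S) := by rw [← pow_mul]; ring_nf
      _ ≤ ((n : ℝ)⁻¹) ^ (2 * S) := by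
          apply pow_le_pow_left₀ (by positivity)
          rw [div_pow, div_le_iff₀ (by positivity)]
          calc (s : ℝ) ^ 2 ≤ n := hle
            _ = _ := by field_simp
      _ = _ := by rw [inv_pow, inv_pow, ← pow_mul]; ring_nf
  · have hsq : √(n : ℝ) ≤ s := by
      rw [Real.sqrt_le_left (by positivity)]; exact hgt.le
    have hmono : ∀ j, freq u (u j) ≤ freq u 0 := by
      intro j
      unfold freq
      gcongr
      exact hmaj _
    have h2 : wordProb u ≤ Real.exp (-√(n : ℝ)) := by
      calc wordProb u ≤ ∏ _j : Fin n, freq u 0 :=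
            prod_le_prod (fun _ _ => freq_nonneg _ _) fun j _ => hmono j
        _ = (1 - s / n) ^ n := by rw [hf0]; simp
        _ ≤ (Real.exp (-(s / n))) ^ n := by
            apply pow_le_pow_left₀
            · rw [sub_nonneg, div_le_one hn']; exact hsn
            · linarith [Real.add_one_le_exp (-((s : ℝ) / n))]
        _ = Real.exp (-s) := by rw [← Real.exp_nat_mul]; congr 1; field_simp
        _ ≤ _ := Real.exp_le_exp.mpr (by linarith)
    refine h2.trans ?_
    have h3 : √(n : ℝ) ^ (4 * S) = (n : ℝ) ^ (2 * S) := by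
      rw [show 4 * S = 2 * (2 * S) by ring, pow_mul, Real.sq_sqrt hn'.le]
    rw [h3] at hexp
    rw [inv_pow, ← pow_mul, mul_comm S 2, ← one_div, le_div_iff₀ (by positivity)]
    linarith

/-- The frequencies for which `0` is a most frequent letter have negligible total correlation. -/
lemma sum_corr_majority (k K p : ℕ) [Fact p.Prime] (hK : 1 ≤ K) (η : ℝ) (hη : 0 < η) :
    ∀ᶠ n : ℕ in Filter.atTop, ∀ v : Fin n → ZMod p, n * chi (freq v) ≤ K * Real.log n →
      ∑ u : Fin n → ZMod p with u ≠ 0 ∧ ∀ a, cnt u a ≤ cnt u 0,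
        ‖corr (lift (k + 3) u) (lift (k + 3) v)‖ ≤ η * (n * (k + 3)).factorial := by
  -- `n ^ (-S')` beats the factor `n ^ (K (k + 3))` of `corr_le_many`, the polynomial factor there
  -- and the number of types
  set S' : ℕ := 2 * p + K * (k + 3) + 1 with hS'
  set S : ℕ := 4 * S' with hS
  set C : ℝ := (6 * (k + 4 : ℕ)) ^ p with hC
  set A : ℝ := S * (S * (k + 3)).factorial * Real.exp p with hA
  set z : ℕ → ℝ := fun n => 2 * √(K * Real.log n / n) with hz
  have hlog : ∀ m : ℕ, Filter.Tendsto (fun n : ℕ => Real.log n ^ m / n) Filter.atTop (nhds 0) := by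
    intro m
    exact ((Real.isLittleO_pow_log_id_atTop (n := m)).tendsto_div_nhds_zero).comp
      tendsto_natCast_atTop_atTop
  have hz0 : Filter.Tendsto z Filter.atTop (nhds 0) := by
    have h1 : Filter.Tendsto (fun n : ℕ => K * Real.log n / n) Filter.atTop (nhds 0) := by
      have := (hlog 1).const_mul (K : ℝ)
      simpa [mul_div_assoc] using this
    have h2 := (Real.continuous_sqrt.tendsto 0).comp h1
    rw [Real.sqrt_zero] at h2
    have h3 := h2.const_mul (2 : ℝ)
    rwa [mul_zero] at h3
  have hw0 : Filter.Tendsto (fun n : ℕ => n * z n ^ 3) Filter.atTop (nhds 0) := by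
    have h1 : Filter.Tendsto (fun n : ℕ => 64 * (K : ℝ) ^ 3 * (Real.log n ^ 3 / n)) Filter.atTop (nhds 0) := by
      simpa using (hlog 3).const_mul (64 * (K : ℝ) ^ 3)
    have h2 := (Real.continuous_sqrt.tendsto 0).comp h1
    rw [Real.sqrt_zero] at h2
    refine h2.congr' ?_
    filter_upwards [Filter.eventually_gt_atTop 0] with n hn
    have hn' : (0 : ℝ) < n := by exact_mod_cast hn
    have hn1 : (1 : ℝ) ≤ n := by exact_mod_cast hn
    have hl := Real.log_nonneg hn1
    simp only [Function.comp, hz]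
    rw [Real.sqrt_eq_iff_mul_self_eq (by positivity) (by positivity)]
    have e : √(K * Real.log n / n) ^ 2 = K * Real.log n / n := Real.sq_sqrt (by positivity)
    symm
    calc (n : ℝ) * (2 * √(K * Real.log n / n)) ^ 3 * (n * (2 * √(K * Real.log n / n)) ^ 3)
        = 64 * n ^ 2 * (√(K * Real.log n / n) ^ 2) ^ 3 := by ring
      _ = _ := by rw [e]; field_simp
  have hlim : Filter.Tendsto (fun n : ℕ => A * (n * z n ^ 3) + C / n) Filter.atTop (nhds 0) := by
    simpa using (hw0.const_mul A).add (tendsto_const_div_atTop_nhds_zero_nat C)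
  have hexp : ∀ᶠ n : ℕ in Filter.atTop, √(n : ℝ) ^ (4 * S') * Real.exp (-√(n : ℝ)) ≤ 1 := by
    have := (Real.tendsto_pow_mul_exp_neg_atTop_nhds_zero (4 * S')).comp
      (Real.tendsto_sqrt_atTop.comp tendsto_natCast_atTop_atTop)
    exact (this.eventually (gt_mem_nhds zero_lt_one)).mono fun n h => h.le
  have hL : ∀ᶠ n : ℕ in Filter.atTop, 1 ≤ K * Real.log n := by
    filter_upwards [(Real.tendsto_log_atTop.comp tendsto_natCast_atTop_atTop).eventually_ge_atTop 1]
      with n h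
    simp only [Function.comp] at h
    have : (1 : ℝ) ≤ K := by exact_mod_cast hK
    nlinarith
  filter_upwards [hlim.eventually (gt_mem_nhds hη), hexp, hL, Filter.eventually_gt_atTop 0,
    Filter.eventually_ge_atTop (2 * S), hz0.eventually (gt_mem_nhds zero_lt_one),
    hw0.eventually (gt_mem_nhds zero_lt_one)] with n hnη hexp hL hn hSn hz1 hw1 v hv
  have hn' : (0 : ℝ) < n := by exact_mod_cast hn
  set Nf : ℝ := ((n * (k + 3)).factorial : ℝ) with hNf
  have hNf0 : 0 < Nf := by rw [hNf]; exact_mod_cast Nat.factorial_pos _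
  set P : ℝ := (3 * ((n * (k + 3) : ℕ) + 1)) ^ p with hP
  have hzn0 : 0 ≤ z n := by simp only [hz]; positivity
  set F : ℝ := ((S * (k + 3)).factorial : ℝ) with hF
  set Q₀ : ℝ := P * n ^ (K * (k + 3)) * ((n : ℝ) ^ S')⁻¹ with hQ₀
  have hpoint : ∀ u ∈ univ.filter (fun u : Fin n → ZMod p => u ≠ 0 ∧ ∀ a, cnt u a ≤ cnt u 0),
      ‖corr (lift (k + 3) u) (lift (k + 3) v)‖
        ≤ (∑ s ∈ Icc 1 S, if #{j | u j ≠ 0} = s then F * (z n ^ 3) ^ s * Nf else 0)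
          + Q₀ * wordProb u * Nf := by
    intro u hu
    obtain ⟨hu0, humaj⟩ := (mem_filter.mp hu).2
    have hW := (wordProb_pos u).le
    have hpos : 1 ≤ #{j | u j ≠ 0} := by
      rw [Nat.one_le_iff_ne_zero]
      intro h0
      apply hu0
      rw [card_eq_zero, filter_eq_empty_iff] at h0
      funext j
      simpa using h0 (mem_univ j)
    rcases le_total #{j | u j ≠ 0} S with hle | hge
    · have h1 := corr_le_few k (K * Real.log n) (z n) hn hL rfl hz1.le u v hv _ S rfl hle hSn
      rw [sum_ite_eq, if_pos (mem_Icc.mpr ⟨hpos, hle⟩)]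
      have : 0 ≤ Q₀ * wordProb u * Nf := by positivity
      linarith
    · have h1 := corr_le_many k K S' hn u v hv
        (wordProb_le_of_supp S' hn hexp u humaj _ rfl hge)
      have : 0 ≤ ∑ s ∈ Icc 1 S, if #{j | u j ≠ 0} = s then F * (z n ^ 3) ^ s * Nf else 0 :=
        sum_nonneg fun s _ => by split_ifs <;> positivity
      linarith
  have hcard : ∀ s : ℕ, (#{u : Fin n → ZMod p | #{j | u j ≠ 0} = s} : ℝ) ≤ Real.exp p * n ^ s := by
    intro s
    have h1 := card_supp_le (n := n) (p := p) s ((n : ℝ)⁻¹) (by positivity)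
    have e : (n : ℝ) * (p * (n : ℝ)⁻¹) = p := by field_simp
    rw [e, inv_pow, ← div_eq_mul_inv, div_le_iff₀ (by positivity)] at h1
    exact h1
  have hfirst : ∑ u : Fin n → ZMod p,
      (∑ s ∈ Icc 1 S, if #{j | u j ≠ 0} = s then F * (z n ^ 3) ^ s * Nf else 0)
        ≤ A * (n * z n ^ 3) * Nf := by
    rw [sum_comm]
    calc ∑ s ∈ Icc 1 S, ∑ u : Fin n → ZMod p,
          (if #{j | u j ≠ 0} = s then F * (z n ^ 3) ^ s * Nf else 0)
        ≤ ∑ s ∈ Icc 1 S, F * Real.exp p * (n * z n ^ 3) * Nf := by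
          apply sum_le_sum
          intro s hs
          rw [← sum_filter, sum_const, nsmul_eq_mul]
          have hs1 : s ≠ 0 := by have := (mem_Icc.mp hs).1; omega
          calc (#{u : Fin n → ZMod p | #{j | u j ≠ 0} = s} : ℝ) * (F * (z n ^ 3) ^ s * Nf)
              ≤ (Real.exp p * n ^ s) * (F * (z n ^ 3) ^ s * Nf) := by
                gcongr; exact hcard s
            _ = F * Real.exp p * (n * z n ^ 3) ^ s * Nf := by rw [mul_pow]; ring
            _ ≤ _ := by
                gcongr
                exact pow_le_of_le_one (by positivity) hw1.le hs1
      _ = A * (n * z n ^ 3) * Nf := by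
          rw [sum_const, nsmul_eq_mul, Nat.card_Icc, hA]
          simp only [Nat.add_sub_cancel]
          ring
  have hsecond : ∑ u : Fin n → ZMod p, Q₀ * wordProb u * Nf ≤ C / n * Nf := by
    rw [← sum_mul, ← mul_sum]
    gcongr
    calc Q₀ * ∑ u : Fin n → ZMod p, wordProb u ≤ Q₀ * ((n : ℝ) + 1) ^ p := by
          gcongr; exact sum_wordProb_le hn
      _ = P * ((n : ℝ) + 1) ^ p * (n ^ (K * (k + 3)) * ((n : ℝ) ^ S')⁻¹) := by rw [hQ₀]; ring
      _ ≤ C * (n : ℝ) ^ (2 * p) * (n ^ (K * (k + 3)) * ((n : ℝ) ^ S')⁻¹) :=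
          mul_le_mul_of_nonneg_right (poly_factor_le k p n hn) (by positivity)
      _ = C / n := by
          rw [hS', pow_succ, pow_add]
          field_simp
  calc ∑ u : Fin n → ZMod p with u ≠ 0 ∧ ∀ a, cnt u a ≤ cnt u 0,
        ‖corr (lift (k + 3) u) (lift (k + 3) v)‖
      ≤ _ := sum_le_sum hpoint
    _ ≤ ∑ u : Fin n → ZMod p,
        ((∑ s ∈ Icc 1 S, if #{j | u j ≠ 0} = s then F * (z n ^ 3) ^ s * Nf else 0)
          + Q₀ * wordProb u * Nf) := by
        apply sum_le_univ_sum_of_nonneg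
        intro u
        have hW := (wordProb_pos u).le
        exact add_nonneg (sum_nonneg fun s _ => by split_ifs <;> positivity) (by positivity)
    _ ≤ A * (n * z n ^ 3) * Nf + C / n * Nf := by rw [sum_add_distrib]; exact add_le_add hfirst hsecond
    _ = (A * (n * z n ^ 3) + C / n) * Nf := by ring
    _ ≤ η * Nf := by gcongr

/-- Every nonconstant frequency has a translate by a constant for which `0` is a most frequent
letter. -/
lemma sum_corr_nonconst (d : ℕ) (v : Fin n → ZMod p)
    [DecidablePred fun u : Fin n → ZMod p => ∃ c, u = fun _ => c] :
    ∑ u : Fin n → ZMod p with ¬ ∃ c, u = fun _ => c, ‖corr (lift d u) (lift d v)‖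
      ≤ p * ∑ u : Fin n → ZMod p with u ≠ 0 ∧ ∀ a, cnt u a ≤ cnt u 0,
          ‖corr (lift d u) (lift d v)‖ := by
  set M : (Fin n → ZMod p) → Prop := fun u => u ≠ 0 ∧ ∀ a, cnt u a ≤ cnt u 0 with hM
  set f : (Fin n → ZMod p) → ℝ := fun u => ‖corr (lift d u) (lift d v)‖ with hf
  have hshift : ∀ (u : Fin n → ZMod p) (c : ZMod p), f (u - fun _ => c) = f u := by
    intro u c
    exact norm_corr_sub (lift d u) (lift d v) c
  have hcnt : ∀ (u : Fin n → ZMod p) (c a : ZMod p), cnt (u - fun _ => c) a = cnt u (a + c) := by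
    intro u c a
    unfold cnt
    simp [sub_eq_iff_eq_add]
  have hpoint : ∀ u ∈ univ.filter (fun u : Fin n → ZMod p => ¬ ∃ c, u = fun _ => c),
      f u ≤ ∑ c, if M (u - fun _ => c) then f (u - fun _ => c) else 0 := by
    intro u hu
    have hu' := (mem_filter.mp hu).2
    obtain ⟨c, -, hc⟩ := exists_max_image univ (cnt u) univ_nonempty
    have hMc : M (u - fun _ => c) := by
      refine ⟨fun h => hu' ⟨c, sub_eq_zero.mp h⟩, fun a => ?_⟩
      rw [hcnt, hcnt, zero_add]
      exact hc _ (mem_univ _)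
    calc f u = if M (u - fun _ => c) then f (u - fun _ => c) else 0 := by
          rw [if_pos hMc, hshift]
      _ ≤ _ := single_le_sum (f := fun c => if M (u - fun _ => c) then f (u - fun _ => c) else 0)
          (fun c _ => by split_ifs; exacts [norm_nonneg _, le_rfl]) (mem_univ c)
  calc ∑ u : Fin n → ZMod p with ¬ ∃ c, u = fun _ => c, f u
      ≤ ∑ u : Fin n → ZMod p with ¬ ∃ c, u = fun _ => c,
          ∑ c, if M (u - fun _ => c) then f (u - fun _ => c) else 0 := sum_le_sum hpoint
    _ ≤ ∑ u : Fin n → ZMod p, ∑ c : ZMod p, if M (u - fun _ => c) then f (u - fun _ => c) else 0 :=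
        sum_le_univ_sum_of_nonneg fun u => sum_nonneg fun c _ => by
          split_ifs; exacts [norm_nonneg _, le_rfl]
    _ = ∑ c : ZMod p, ∑ u : Fin n → ZMod p, if M u then f u else 0 := by
        rw [sum_comm]
        refine sum_congr rfl fun c _ => ?_
        exact Equiv.sum_comp (Equiv.subRight (fun _ => c : Fin n → ZMod p))
          (fun u => if M u then f u else 0)
    _ = _ := by
        rw [sum_const, card_univ, ZMod.card, nsmul_eq_mul, ← sum_filter]

/-- Summed over all vectors, the constant frequencies contribute exactly the main term. -/
lemma sum_main_term (d : ℕ) (hd : 0 < d) (hdp : d < p) (hn : 0 < n) :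
    ∑ v : Fin n → ZMod p, ‖∑ c : ZMod p, (ZMod.stdAddChar (c * ((d : ZMod p) * ∑ k, v k)) : ℂ)‖
      = (p : ℝ) ^ n := by
  have h1 : ∀ v : Fin n → ZMod p, ∑ c : ZMod p, (ZMod.stdAddChar (c * ((d : ZMod p) * ∑ k, v k)) : ℂ)
      = ((if (d : ZMod p) * ∑ k, v k = 0 then p else 0 : ℝ) : ℂ) := by
    intro v
    rw [AddChar.sum_mulShift _ (ZMod.isPrimitive_stdAddChar p), ZMod.card]
    split_ifs <;> simp
  have h2 : ((∑ v : Fin n → ZMod p,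
      ‖∑ c : ZMod p, (ZMod.stdAddChar (c * ((d : ZMod p) * ∑ k, v k)) : ℂ)‖ : ℝ) : ℂ)
      = ∑ v : Fin n → ZMod p, ∑ c : ZMod p, (ZMod.stdAddChar (c * ((d : ZMod p) * ∑ k, v k)) : ℂ) := by
    rw [Complex.ofReal_sum]
    refine sum_congr rfl fun v _ => ?_
    rw [h1 v, Complex.norm_real, Real.norm_of_nonneg (by split_ifs <;> positivity)]
  have h3 : ∀ c : ZMod p, ∑ v : Fin n → ZMod p,
      (ZMod.stdAddChar (c * ((d : ZMod p) * ∑ k, v k)) : ℂ) = if c = 0 then (p : ℂ) ^ n else 0 := by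
    intro c
    have h4 : ∀ v : Fin n → ZMod p, c * ((d : ZMod p) * ∑ k, v k) = ∑ k, v k * (c * d) := by
      intro v
      rw [← sum_mul]; ring
    simp only [h4]
    rw [orth (fun _ : Fin n => c * (d : ZMod p)), Fintype.card_fin]
    have hd0 : (d : ZMod p) ≠ 0 := by
      rw [Ne, ZMod.natCast_eq_zero_iff]
      intro h
      exact absurd (Nat.le_of_dvd hd h) (by omega)
    have : ((fun _ : Fin n => c * (d : ZMod p)) = 0) ↔ c = 0 := by
      rw [funext_iff]
      constructor
      · intro h
        simpa [hd0] using h ⟨0, hn⟩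
      · rintro rfl; simp
    simp only [this]
  rw [sum_comm] at h2
  simp only [h3] at h2
  rw [sum_ite_eq' univ (0 : ZMod p), if_pos (mem_univ _)] at h2
  exact_mod_cast h2

/-- Nearly equidistributed vectors contribute at most `1 + o(1)` to the first moment. -/
lemma balanced_sum (k K p : ℕ) [Fact p.Prime] (hK : 1 ≤ K) (hkp : k + 3 < p) (η : ℝ) (hη : 0 < η) :
    ∀ᶠ n : ℕ in Filter.atTop,
      ∑ v : Fin n → ZMod p with n * chi (freq v) ≤ K * Real.log n, (kerCount (k + 3) v : ℝ)
        ≤ (1 + η) * (n * (k + 3)).factorial := by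
  classical
  have hp0 : (0 : ℝ) < p := by exact_mod_cast (Fact.out : p.Prime).pos
  filter_upwards [sum_corr_majority k K p hK (η / p) (by positivity), Filter.eventually_gt_atTop 0]
    with n hmaj hn
  set Nf : ℝ := ((n * (k + 3)).factorial : ℝ) with hNf
  have hNf0 : 0 < Nf := by rw [hNf]; exact_mod_cast Nat.factorial_pos _
  set G : (Fin n → ZMod p) → ℝ :=
    fun v => ‖∑ c : ZMod p, (ZMod.stdAddChar (c * (((k + 3 : ℕ) : ZMod p) * ∑ j, v j)) : ℂ)‖ with hG
  have hpoint : ∀ v ∈ univ.filter (fun v : Fin n → ZMod p => n * chi (freq v) ≤ K * Real.log n),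
      (kerCount (k + 3) v : ℝ) ≤ ((p : ℝ) ^ n)⁻¹ * (Nf * G v + η * Nf) := by
    intro v hv
    have hv' := (mem_filter.mp hv).2
    have h1 := kerCount_fourier (k + 3) v
    have h2 : (p : ℝ) ^ n * kerCount (k + 3) v
        = ‖∑ u : Fin n → ZMod p, corr (lift (k + 3) u) (lift (k + 3) v)‖ := by
      rw [← h1]; simp
    have hconst : ∑ u : Fin n → ZMod p with ∃ c, u = fun _ => c,
        corr (lift (k + 3) u) (lift (k + 3) v)
        = (Nf : ℂ) * ∑ c : ZMod p, (ZMod.stdAddChar (c * (((k + 3 : ℕ) : ZMod p) * ∑ j, v j)) : ℂ) := by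
      rw [mul_sum]
      symm
      apply sum_bij (fun c _ => (fun _ => c : Fin n → ZMod p))
      · intro c _; exact mem_filter.mpr ⟨mem_univ _, c, rfl⟩
      · intro a _ b _ hab; exact congrFun hab ⟨0, hn⟩
      · intro u hu
        obtain ⟨c, hc⟩ := (mem_filter.mp hu).2
        exact ⟨c, mem_univ _, hc.symm⟩
      · intro c _
        rw [corr_const, hNf]
        simp
    rw [← sum_filter_add_sum_filter_not univ (fun u : Fin n → ZMod p => ∃ c, u = fun _ => c),
      hconst] at h2
    have h3 : (p : ℝ) ^ n * kerCount (k + 3) v ≤ Nf * G v + η * Nf := by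
      rw [h2]
      refine (norm_add_le _ _).trans (add_le_add ?_ ?_)
      · rw [norm_mul, Complex.norm_real, Real.norm_of_nonneg hNf0.le]
      · refine (norm_sum_le _ _).trans ((sum_corr_nonconst (k + 3) v).trans ?_)
        calc (p : ℝ) * _ ≤ p * (η / p * Nf) := by gcongr; exact hmaj v hv'
          _ = η * Nf := by field_simp
    rw [← div_eq_inv_mul, le_div_iff₀ (by positivity)]
    linarith
  calc ∑ v : Fin n → ZMod p with n * chi (freq v) ≤ K * Real.log n, (kerCount (k + 3) v : ℝ)
      ≤ _ := sum_le_sum hpoint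
    _ ≤ ∑ v : Fin n → ZMod p, ((p : ℝ) ^ n)⁻¹ * (Nf * G v + η * Nf) :=
        sum_le_univ_sum_of_nonneg fun v => by
          have : 0 ≤ G v := norm_nonneg _
          positivity
    _ = ((p : ℝ) ^ n)⁻¹ * (Nf * ∑ v, G v + p ^ n * (η * Nf)) := by
        rw [← mul_sum, sum_add_distrib, ← mul_sum, sum_const, nsmul_eq_mul]
        simp [ZMod.card]
    _ = (1 + η) * Nf := by
        have hmain : ∑ v, G v = (p : ℝ) ^ n := sum_main_term (k + 3) (by omega) hkp hn
        rw [hmain]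
        field_simp

end Balanced

/-! ### The first moment and the determinant -/

/-- The expected number of nonzero kernel vectors modulo `p` is asymptotically at most `2`. -/
lemma first_moment (d : ℕ) (hd : 3 ≤ d) (p : ℕ) [Fact p.Prime] (hdp : d < p) :
    ∀ᶠ n : ℕ in Filter.atTop,
      ∑ v : Fin n → ZMod p with v ≠ 0, (kerCount d v : ℝ) ≤ 2 * (n * d).factorial := by
  obtain ⟨k, rfl⟩ := Nat.exists_eq_add_of_le' hd
  obtain ⟨ε, hε, hε1, hεd, hsparse⟩ := sparse_sum (k + 3) hd p
  obtain ⟨K, hK, hunb⟩ := unbalanced_sum k p ε hε hε1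
  filter_upwards [hsparse (1 / 4) (by norm_num), hunb (1 / 4) (by norm_num),
    balanced_sum k K p hK hdp (1 / 4) (by norm_num), Filter.eventually_gt_atTop 0]
    with n h1 h2 h3 hn
  have hn' : (0 : ℝ) < n := by exact_mod_cast hn
  set Nf : ℝ := ((n * (k + 3)).factorial : ℝ) with hNf
  have hNf0 : 0 < Nf := by rw [hNf]; exact_mod_cast Nat.factorial_pos _
  set A : (Fin n → ZMod p) → Prop := fun v => v ≠ 0 ∧ (#{j | v j ≠ 0} : ℝ) ≤ ε * n with hA
  set B : (Fin n → ZMod p) → Prop :=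
    fun v => (∀ a, freq v a ≤ 1 - ε) ∧ K * Real.log n < n * chi (freq v) with hB
  set C : (Fin n → ZMod p) → Prop := fun v => n * chi (freq v) ≤ K * Real.log n with hC
  have hpoint : ∀ v ∈ univ.filter (fun v : Fin n → ZMod p => v ≠ 0),
      (kerCount (k + 3) v : ℝ) ≤ (if A v then (kerCount (k + 3) v : ℝ) else 0)
        + (if B v then (kerCount (k + 3) v : ℝ) else 0)
        + (if C v then (kerCount (k + 3) v : ℝ) else 0) := by
    intro v hv
    have hv0 : v ≠ 0 := (mem_filter.mp hv).2
    have hnn : (0 : ℝ) ≤ kerCount (k + 3) v := Nat.cast_nonneg _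
    by_cases hdom : ∃ c, (#{j | v j ≠ c} : ℝ) ≤ ε * n
    · obtain ⟨c, hc⟩ := hdom
      by_cases hc0 : c = 0
      · subst hc0
        rw [if_pos (show A v from ⟨hv0, hc⟩)]
        split_ifs <;> linarith
      · have : kerCount (k + 3) v = 0 := by
          apply kerCount_eq_zero (k + 3) (by omega) hdp v c hc0
          have h4 : (#{j | v j ≠ c} : ℝ) * ((k + 3 : ℕ) : ℝ) < n := by
            calc (#{j | v j ≠ c} : ℝ) * ((k + 3 : ℕ) : ℝ) ≤ ε * n * ((k + 3 : ℕ) : ℝ) := by gcongr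
              _ = (ε * ((k + 3 : ℕ) : ℝ)) * n := by ring
              _ < 1 * n := by gcongr
              _ = n := one_mul _
          exact_mod_cast h4
        rw [this]
        simp
    · push Not at hdom
      have hfreq : ∀ a, freq v a ≤ 1 - ε := by
        intro a
        unfold freq
        rw [Fintype.card_fin, div_le_iff₀ hn']
        have hsum := card_filter_add_card_filter_not (s := (univ : Finset (Fin n))) (fun j => v j = a)
        rw [card_univ, Fintype.card_fin] at hsum
        have hsum' : (cnt v a : ℝ) + (#{j | v j ≠ a} : ℝ) = n := by exact_mod_cast hsum
        have := hdom a
        linarith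
      rcases le_or_gt (n * chi (freq v)) (K * Real.log n) with h | h
      · rw [if_pos (show C v from h)]
        split_ifs <;> linarith
      · rw [if_pos (show B v from ⟨hfreq, h⟩)]
        split_ifs <;> linarith
  calc ∑ v : Fin n → ZMod p with v ≠ 0, (kerCount (k + 3) v : ℝ)
      ≤ _ := sum_le_sum hpoint
    _ ≤ ∑ v : Fin n → ZMod p, ((if A v then (kerCount (k + 3) v : ℝ) else 0)
        + (if B v then (kerCount (k + 3) v : ℝ) else 0)
        + (if C v then (kerCount (k + 3) v : ℝ) else 0)) :=
        sum_le_univ_sum_of_nonneg fun v => by split_ifs <;> positivity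
    _ ≤ 1 / 4 * Nf + 1 / 4 * Nf + (1 + 1 / 4) * Nf := by
        rw [sum_add_distrib, sum_add_distrib, ← sum_filter, ← sum_filter, ← sum_filter]
        exact add_le_add (add_le_add h1 h2) h3
    _ ≤ 2 * Nf := by linarith

/-- A singular adjacency matrix has a nonzero kernel vector modulo `p`. -/
lemma exists_kernel (n d p : ℕ) [Fact p.Prime] (P : Equiv.Perm (Fin n × Fin d))
    (h : (adjMat n d P).det = 0) :
    ∃ v : Fin n → ZMod p, v ≠ 0 ∧ ∀ k, ∑ i, v (P (k, i)).1 = 0 := by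
  have h1 : ((adjMat n d P).map (Int.castRingHom (ZMod p))).det = 0 := by
    have := RingHom.map_det (Int.castRingHom (ZMod p)) (adjMat n d P)
    rw [h, map_zero] at this
    exact this.symm
  obtain ⟨v, hv0, hv⟩ := Matrix.exists_mulVec_eq_zero_iff.mpr h1
  refine ⟨v, hv0, fun k => ?_⟩
  have hk := congrFun hv k
  simp only [Matrix.mulVec, dotProduct, Matrix.map_apply, adjMat, Matrix.of_apply, Pi.zero_apply,
    Nat.card_eq_fintype_card, Fintype.card_subtype] at hk
  rw [← hk, ← Finset.sum_fiberwise' univ (fun i => (P (k, i)).1) v]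
  refine sum_congr rfl fun l _ => ?_
  simp

/-- Nonzero multiples of kernel vectors are again such, so each singular matrix is counted at least
`p - 1` times in the first moment. -/
lemma card_singular_le (n d p : ℕ) [Fact p.Prime] :
    ((p : ℝ) - 1) * Nat.card {P : Equiv.Perm (Fin n × Fin d) // (adjMat n d P).det = 0}
      ≤ ∑ v : Fin n → ZMod p with v ≠ 0, (kerCount d v : ℝ) := by
  classical
  set W : Equiv.Perm (Fin n × Fin d) → Finset (Fin n → ZMod p) :=
    fun P => {v | v ≠ 0 ∧ ∀ k, ∑ i, v (P (k, i)).1 = 0} with hW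
  have h1 : ∑ v : Fin n → ZMod p with v ≠ 0, kerCount d v = ∑ P, #(W P) := by
    unfold kerCount
    simp only [hW, card_filter]
    rw [sum_comm]
    refine sum_congr rfl fun P _ => ?_
    rw [sum_filter]
    refine sum_congr rfl fun v _ => ?_
    by_cases hv : v = 0 <;> simp [hv]
  have h2 : ∀ P ∈ univ.filter (fun P : Equiv.Perm (Fin n × Fin d) => (adjMat n d P).det = 0),
      p - 1 ≤ #(W P) := by
    intro P hP
    obtain ⟨v, hv0, hv⟩ := exists_kernel n d p P (mem_filter.mp hP).2
    have h3 : #((univ : Finset (ZMod p)).erase 0) = p - 1 := by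
      rw [card_erase_of_mem (mem_univ _), card_univ, ZMod.card]
    rw [← h3]
    apply card_le_card_of_injOn (fun c => c • v)
    · intro c hc
      have hc0 : c ≠ 0 := (mem_erase.mp hc).1
      refine mem_filter.mpr ⟨mem_univ _, smul_ne_zero hc0 hv0, fun k => ?_⟩
      simp only [Pi.smul_apply, smul_eq_mul]
      rw [← mul_sum, hv k, mul_zero]
    · intro a _ b _ hab
      exact smul_left_injective (ZMod p) hv0 hab
  have h4 : (p - 1) * Nat.card {P : Equiv.Perm (Fin n × Fin d) // (adjMat n d P).det = 0}
      ≤ ∑ P, #(W P) := by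
    rw [Nat.card_eq_fintype_card, Fintype.card_subtype, mul_comm, ← smul_eq_mul]
    exact (card_nsmul_le_sum _ _ _ h2).trans (sum_le_sum_of_subset (subset_univ _))
  rw [← Nat.cast_sum, h1]
  have hp1 : ((p - 1 : ℕ) : ℝ) = p - 1 := by
    rw [Nat.cast_sub (Fact.out : p.Prime).one_lt.le, Nat.cast_one]
  rw [← hp1]
  exact_mod_cast h4

end SingDigraph

/-- For fixed `d ≥ 3`, the probability that the adjacency matrix of a random
`d`-regular directed graph on `n` vertices from the configuration model is singular (over the
integers/reals) tends to `0` as `n → ∞`. -/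
theorem stmt2 (d : ℕ) (hd : 3 ≤ d) :
    Filter.Tendsto
      (fun n : ℕ =>
        (Nat.card {P : Equiv.Perm (Fin n × Fin d) // Matrix.det (adjMat n d P) = 0} : ℝ)
          / (Nat.factorial (n * d) : ℝ))
      Filter.atTop (nhds 0) := by
  open SingDigraph in
  rw [Metric.tendsto_nhds]
  intro η hη
  obtain ⟨m, hm⟩ := exists_nat_gt (2 / η)
  -- a prime `p` with `2 / (p - 1) < η` and `d < p`
  obtain ⟨p, hp, hprime⟩ := Nat.exists_infinite_primes (m + d + 1)
  have : Fact p.Prime := ⟨hprime⟩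
  filter_upwards [first_moment d hd p (by omega)] with n hn
  have h1 := (card_singular_le n d p).trans hn
  have hNf0 : (0 : ℝ) < (n * d).factorial := by exact_mod_cast Nat.factorial_pos _
  have hpm : (m : ℝ) ≤ p - 1 := by
    have : (m : ℝ) + 1 ≤ p := by exact_mod_cast (by omega : m + 1 ≤ p)
    linarith
  have hm2 : 2 < (p - 1 : ℝ) * η := by
    rw [div_lt_iff₀ hη] at hm
    nlinarith
  have hp1 : (0 : ℝ) < (p : ℝ) - 1 := by
    have h2 : (0 : ℝ) < 2 / η := by positivity
    linarith
  rw [Real.dist_eq, sub_zero, abs_of_nonneg (by positivity), div_lt_iff₀ hNf0]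
  refine lt_of_mul_lt_mul_left ?_ hp1.le
  calc _ ≤ 2 * ((n * d).factorial : ℝ) := h1
    _ < ((p : ℝ) - 1) * η * (n * d).factorial := by gcongr
    _ = _ := by ring
end

section
/- Let d ≥ 3 be a fixed integer and p a prime. Fix n ≥ 1 and a vector v ∈ F_p^n with counting vector Φ(v) = (n_0, n_1, …, n_{p−1}) (so n_j = #{i : v_i = j} and Σ_j n_j = n). Then the number of permutations 𝒫 of {1,…,n}×{1,…,d} such that A(𝒫)·v ≡ 0 (mod p) equals (∏_{j=0}^{p−1} (d·n_j)!) · N_n(n_0,…,n_{p−1}), where N_n(n_0,…,n_{p−1}) = #{ (a^{(1)},…,a^{(n)}) ∈ (T_{d,p})^n : Σ_{i=1}^n Φ(a^{(i)}) = (d n_0, d n_1, …, d n_{p−1}) }. -/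
/-- The labelling of the points of the configuration model by the value of `v` on their fiber. -/
def pointLabel {p n : ℕ} (d : ℕ) (v : Fin n → ZMod p) (x : Fin n × Fin d) : ZMod p := v x.1

/-- Two labellings of a finite set with the same label multiplicities differ by a permutation. -/
lemma exists_perm_comp_eq {X Y : Type*} [Finite X] (w b : X → Y)
    (h : ∀ y, Nat.card {x // b x = y} = Nat.card {x // w x = y}) :
    ∃ P : Equiv.Perm X, w ∘ P = b := by
  have e : ∀ y, {x // b x = y} ≃ {x // w x = y} := fun y =>
    (Finite.card_eq.mp (h y)).some
  refine ⟨(Equiv.sigmaFiberEquiv b).symm.trans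
    ((Equiv.sigmaCongrRight e).trans (Equiv.sigmaFiberEquiv w)), ?_⟩
  funext x
  exact (e (b x) ⟨x, rfl⟩).2

/-- If `b` has the label multiplicities of `w`, the permutations carrying `w` to `b` form a coset
of the stabilizer of `w`, whose order is the product of the factorials of the multiplicities. -/
lemma card_perm_comp_eq {X Y : Type*} [Finite X] [Fintype Y] (w b : X → Y)
    (h : ∀ y, Nat.card {x // b x = y} = Nat.card {x // w x = y}) :
    Nat.card {P : Equiv.Perm X // w ∘ P = b} =
      ∏ y, (Nat.card {x // w x = y}).factorial := by
  classical
  have := Fintype.ofFinite X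
  obtain ⟨P₀, rfl⟩ := exists_perm_comp_eq w b h
  have e : {P : Equiv.Perm X // w ∘ P = w ∘ P₀} ≃ {g : Equiv.Perm X // w ∘ g = w} :=
    (Equiv.mulRight P₀⁻¹).subtypeEquiv fun P => by
      constructor
      · intro hP
        funext x
        simpa using congrFun hP (P₀⁻¹ x)
      · intro hP
        funext x
        simpa using congrFun hP (P₀ x)
  rw [Nat.card_congr e, Nat.card_eq_fintype_card, DomMulAct.stabilizer_card]
  simp only [Nat.card_eq_fintype_card]

lemma card_pointLabel_fiber {p n : ℕ} (d : ℕ) (v : Fin n → ZMod p) (j : ZMod p) :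
    Nat.card {x : Fin n × Fin d // pointLabel d v x = j} = d * Nat.card {i : Fin n // v i = j} := by
  have e : {x : Fin n × Fin d // pointLabel d v x = j} ≃ {i : Fin n // v i = j} × Fin d :=
    { toFun := fun x => (⟨x.1.1, x.2⟩, x.1.2)
      invFun := fun y => ⟨(y.1.1, y.2), y.1.2⟩
      left_inv := fun _ => rfl
      right_inv := fun _ => rfl }
  rw [Nat.card_congr e, Nat.card_prod, Nat.card_fin, mul_comm]

lemma card_uncurry_fiber {p n d : ℕ} (a : Fin n → Fin d → ZMod p) (j : ZMod p) :
    Nat.card {x : Fin n × Fin d // a x.1 x.2 = j} = ∑ i, phi (a i) j := by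
  have e : {x : Fin n × Fin d // a x.1 x.2 = j} ≃ Σ i, {k : Fin d // a i k = j} :=
    { toFun := fun x => ⟨x.1.1, x.1.2, x.2⟩
      invFun := fun y => ⟨(y.1, y.2.1), y.2.2⟩
      left_inv := fun _ => rfl
      right_inv := fun _ => rfl }
  rw [Nat.card_congr e, Nat.card_sigma]
  rfl

lemma mulVec_adjMat {p n d : ℕ} (P : Equiv.Perm (Fin n × Fin d)) (v : Fin n → ZMod p)
    (i : Fin n) :
    ((adjMat n d P).map (Int.cast : ℤ → ZMod p)).mulVec v i =
      ∑ k, pointLabel d v (P (i, k)) := by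
  simp only [Matrix.mulVec, dotProduct, adjMat, Matrix.map_apply, Matrix.of_apply,
    Int.cast_natCast, Nat.card_eq_fintype_card, Fintype.card_subtype, pointLabel]
  simp_rw [Finset.card_filter, Nat.cast_sum, Finset.sum_mul]
  rw [Finset.sum_comm]
  simp

/-- **Proposition: random walk representation.** Fix `d ≥ 3`, a prime `p`,
`n ≥ 1` and `v ∈ F_p^n` with counting vector `(n_j)_{j ∈ F_p}`. The number of permutations
`𝒫` of the configuration model with `A(𝒫)·v = 0` in `F_p` equals
`(∏_j (d·n_j)!) · N_n`, where `N_n` counts the `n`-tuples of elements of `T_{d,p}` whose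
counting vectors sum to `(d·n_j)_j`. -/
theorem stmt3 (d p n : ℕ) (hd : 3 ≤ d) [Fact p.Prime] (hn : 1 ≤ n)
    (v : Fin n → ZMod p) (ν : ZMod p → ℕ)
    (hν : ∀ j : ZMod p, ν j = Nat.card {i : Fin n // v i = j}) :
    Nat.card {P : Equiv.Perm (Fin n × Fin d) //
        ((adjMat n d P).map (Int.cast : ℤ → ZMod p)).mulVec v = 0}
      = (∏ j : ZMod p, Nat.factorial (d * ν j)) *
        Nat.card {a : Fin n → Fin d → ZMod p //
          (∀ i, ∑ k, a i k = 0) ∧ ∀ j : ZMod p, ∑ i, phi (a i) j = d * ν j} := by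
  classical
  set w := pointLabel d v with hw
  have hwν : ∀ j, Nat.card {x // w x = j} = d * ν j := fun j => by
    rw [hw, card_pointLabel_fiber, hν]
  -- Sort the admissible permutations by the array of labels `w ∘ P`.
  let e : {P : Equiv.Perm (Fin n × Fin d) //
        ((adjMat n d P).map (Int.cast : ℤ → ZMod p)).mulVec v = 0} ≃
      Σ a : {a : Fin n → Fin d → ZMod p //
          (∀ i, ∑ k, a i k = 0) ∧ ∀ j : ZMod p, ∑ i, phi (a i) j = d * ν j},
        {P : Equiv.Perm (Fin n × Fin d) // w ∘ P = fun x => a.1 x.1 x.2} :=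
    { toFun := fun P => ⟨⟨fun i k => w (P.1 (i, k)),
        fun i => by rw [← mulVec_adjMat, P.2]; rfl,
        fun j => by
          rw [← card_uncurry_fiber, ← hwν j]
          exact Nat.card_congr (P.1.subtypeEquiv fun _ => Iff.rfl)⟩, ⟨P.1, rfl⟩⟩
      invFun := fun y => ⟨y.2.1, by
        funext i
        refine (mulVec_adjMat _ v i).trans (Eq.trans ?_ (y.1.2.1 i))
        exact Finset.sum_congr rfl fun k _ => congrFun y.2.2 (i, k)⟩
      left_inv := fun _ => rfl
      right_inv := by
        rintro ⟨⟨a, ha⟩, P, hP⟩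
        obtain rfl : (fun i k => w (P (i, k))) = a := by
          funext i k
          exact congrFun hP (i, k)
        rfl }
  rw [Nat.card_congr e, Nat.card_sigma]
  have hfib : ∀ a : {a : Fin n → Fin d → ZMod p //
          (∀ i, ∑ k, a i k = 0) ∧ ∀ j : ZMod p, ∑ i, phi (a i) j = d * ν j},
      Nat.card {P : Equiv.Perm (Fin n × Fin d) // w ∘ P = fun x => a.1 x.1 x.2} =
        ∏ j : ZMod p, Nat.factorial (d * ν j) := fun a => by
    rw [card_perm_comp_eq w _ fun j => by rw [card_uncurry_fiber, a.2.2, hwν]]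
    simp only [hwν]
  simp only [hfib, Finset.sum_const, Finset.card_univ, smul_eq_mul, Nat.card_eq_fintype_card]
  rw [mul_comm]
end
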